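/- arXiv:2303.06647 — 3 statements merged into one kernel-verified Lean document; each statement's English description precedes it below -/
import Mathlib

section
/- Let k, m be positive integers with k, m ≥ 2 and set q = ⌈k/m⌉. For every positive integer d with 2d ≤ k − q, one has C_{k, q+d} ≥ C_{k, k−d}. -/
def C (m k ℓ : ℕ) : ℕ :=
  (Finset.univ.filter (fun f : Fin ℓ → Fin m => ∑ i, ((f i : ℕ) + 1) = k)).card

section helpers

open Finset

/-- Cut sets of compositions of `k` in `l` parts, all at most `m`. -/
def cutG (m k l : ℕ) : Finset (Finset ℕ) :=
  (range (k + 1)).powerset.filter (fun U => 0 ∈ U ∧ k ∈ U ∧ U.card = l + 1 ∧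
    ∀ x < k, ∃ u ∈ U, x < u ∧ u ≤ x + m)

lemma mem_cutG {m k l : ℕ} {U : Finset ℕ} : U ∈ cutG m k l ↔
    (∀ u ∈ U, u ≤ k) ∧ 0 ∈ U ∧ k ∈ U ∧ U.card = l + 1 ∧
    ∀ x < k, ∃ u ∈ U, x < u ∧ u ≤ x + m := by
  simp only [cutG, mem_filter, mem_powerset, subset_iff, mem_range, Nat.lt_succ_iff]

lemma cutG_succ (m k l : ℕ) :
    (cutG m k (l + 1)).card = ∑ j ∈ Ico (k - m) k, (cutG m j l).card := by
  have key : cutG m k (l + 1) =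
      (Ico (k - m) k).biUnion (fun j => (cutG m j l).image (insert k)) := by
    ext U
    simp only [mem_biUnion, mem_image, mem_Ico]
    constructor
    · intro hU
      rw [mem_cutG] at hU
      obtain ⟨h1, h2, h3, h4, h5⟩ := hU
      have hc : (U.erase k).card = l + 1 := by rw [card_erase_of_mem h3]; omega
      have hne : (U.erase k).Nonempty := by rw [← card_pos]; omega
      have hm := max'_mem _ hne
      have hmax : ∀ u ∈ U.erase k, u ≤ (U.erase k).max' hne := fun u hu => le_max' (U.erase k) u hu
      generalize (U.erase k).max' hne = k' at hm hmax
      have hk' : k' < k := by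
        rw [mem_erase] at hm
        have := h1 _ hm.2
        omega
      refine ⟨k', ⟨?_, hk'⟩, U.erase k, ?_, insert_erase h3⟩
      · obtain ⟨u, hu, hu1, hu2⟩ := h5 k' hk'
        by_cases huk : u = k
        · omega
        · have := hmax u (mem_erase.2 ⟨huk, hu⟩)
          omega
      · rw [mem_cutG]
        refine ⟨hmax, mem_erase.2 ⟨by omega, h2⟩, hm, hc, ?_⟩
        intro x hx
        obtain ⟨u, hu, hu1, hu2⟩ := h5 x (by omega)
        by_cases huk : u = k
        · exact ⟨k', hm, hx, by omega⟩
        · exact ⟨u, mem_erase.2 ⟨huk, hu⟩, hu1, hu2⟩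
    · rintro ⟨j, ⟨hj1, hj2⟩, V, hV, rfl⟩
      rw [mem_cutG] at hV ⊢
      obtain ⟨h1, h2, h3, h4, h5⟩ := hV
      have hk : k ∉ V := fun h => by have := h1 k h; omega
      refine ⟨?_, mem_insert_of_mem h2, mem_insert_self _ _, ?_, ?_⟩
      · intro u hu
        rcases mem_insert.1 hu with rfl | hu
        · exact le_rfl
        · have := h1 u hu
          omega
      · rw [card_insert_of_notMem hk, h4]
      · intro x hx
        by_cases hxj : x < j
        · obtain ⟨u, hu, h⟩ := h5 x hxj
          exact ⟨u, mem_insert_of_mem hu, h⟩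
        · exact ⟨k, mem_insert_self _ _, hx, by omega⟩
  have inj : ∀ j < k, ∀ V ∈ cutG m j l, k ∉ V := by
    intro j hj V hV h
    have := (mem_cutG.1 hV).1 k h
    omega
  rw [key, card_biUnion]
  · refine sum_congr rfl fun j hj => ?_
    rw [card_image_of_injOn]
    intro V hV W hW h
    have hj' := (mem_Ico.1 hj).2
    rw [← erase_insert (inj j hj' V hV), ← erase_insert (inj j hj' W hW)]
    rw [h]
  · intro i hi j hj hij
    rw [Function.onFun, disjoint_left]
    intro U hU hU'
    obtain ⟨V, hV, rfl⟩ := mem_image.1 hU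
    obtain ⟨W, hW, h⟩ := mem_image.1 hU'
    have e : V = W := by
      rw [← erase_insert (inj i (mem_Ico.1 hi).2 V hV),
        ← erase_insert (inj j (mem_Ico.1 hj).2 W hW), h]
    subst e
    rw [mem_cutG] at hV hW
    have a1 := hV.1 j hW.2.2.1
    have a2 := hW.1 i hV.2.2.1
    omega

lemma C_succ (m k l : ℕ) : C m k (l + 1) = ∑ j ∈ Ico (k - m) k, C m j l := by
  have hsum : ∀ f : Fin (l + 1) → Fin m, ∑ i, ((f i : ℕ) + 1) =
      (f 0 : ℕ) + 1 + ∑ i, ((Fin.tail f i : ℕ) + 1) := by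
    intro f
    rw [Fin.sum_univ_succ]
    rfl
  unfold C
  rw [card_eq_sum_card_fiberwise (f := fun f : Fin (l + 1) → Fin m => k - ((f 0 : ℕ) + 1))
    (t := Ico (k - m) k)]
  · refine sum_congr rfl fun j hj => ?_
    rw [mem_Ico] at hj
    refine card_bij (fun f _ => Fin.tail f) ?_ ?_ ?_
    · intro f hf
      simp only [mem_filter, mem_univ, true_and, hsum] at hf ⊢
      omega
    · intro f hf g hg h
      simp only [mem_filter, mem_univ, true_and, hsum] at hf hg
      have h0 : f 0 = g 0 := by
        apply Fin.ext
        omega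
      rw [← Fin.cons_self_tail f, ← Fin.cons_self_tail g, h0, h]
    · intro g hg
      simp only [mem_filter, mem_univ, true_and] at hg
      refine ⟨Fin.cons (⟨k - j - 1, by omega⟩ : Fin m) g, ?_, Fin.tail_cons _ _⟩
      simp only [mem_filter, mem_univ, true_and, hsum, Fin.tail_cons, Fin.cons_zero, hg]
      omega
  · intro f hf
    simp only [coe_filter, Set.mem_setOf_eq, mem_univ, true_and, hsum] at hf
    have := (f 0).isLt
    simp only [coe_Ico, Set.mem_Ico]
    omega

lemma C_eq (m k l : ℕ) : C m k l = (cutG m k l).card := by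
  induction l generalizing k with
  | zero =>
    rcases Nat.eq_zero_or_pos k with rfl | hk
    · have : cutG m 0 0 = {{0}} := by
        ext U
        rw [mem_cutG, mem_singleton]
        constructor
        · rintro ⟨h1, h2, -, -, -⟩
          ext x
          rw [mem_singleton]
          constructor
          · intro hx
            have := h1 x hx
            omega
          · rintro rfl
            exact h2
        · rintro rfl
          simp
      rw [this]
      simp [C]
    · have : cutG m k 0 = ∅ := by
        rw [eq_empty_iff_forall_notMem]
        intro U hU
        obtain ⟨h1, h2, h3, h4, h5⟩ := mem_cutG.1 hU
        have := card_le_one.1 h4.le _ h2 _ h3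
        omega
      rw [this]
      simp [C]
      omega
  | succ l ih =>
    rw [C_succ, cutG_succ]
    exact sum_congr rfl fun j _ => ih j

/-- Subsets of `{1,…,k-1}` of size `d` with no run of `m` consecutive elements. -/
def runD (m k d : ℕ) : Finset (Finset ℕ) :=
  (Ioo 0 k).powerset.filter (fun S => S.card = d ∧
    ∀ x < k, ∃ u ∈ Ioc x (x + m), u ∉ S)

lemma mem_runD {m k d : ℕ} {S : Finset ℕ} : S ∈ runD m k d ↔
    S ⊆ Ioo 0 k ∧ S.card = d ∧ ∀ x < k, ∃ u, u ∉ S ∧ x < u ∧ u ≤ x + m := by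
  simp only [runD, mem_filter, mem_powerset, mem_Ioc]
  refine and_congr_right fun _ => and_congr_right fun _ => forall₂_congr fun x _ =>
    exists_congr fun u => ?_
  tauto

lemma C_eq_runD (m k l : ℕ) (hk : 1 ≤ k) (hl : l ≤ k) :
    C m k l = (runD m k (k - l)).card := by
  rw [C_eq]
  refine card_bij' (fun U _ => range (k + 1) \ U) (fun S _ => range (k + 1) \ S) ?_ ?_ ?_ ?_
  · intro U hU
    obtain ⟨h1, h2, h3, h4, h5⟩ := mem_cutG.1 hU
    have hs : U ⊆ range (k + 1) := fun u hu => by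
      have := h1 u hu
      rw [mem_range]; omega
    rw [mem_runD]
    refine ⟨?_, ?_, ?_⟩
    · intro x hx
      rw [mem_sdiff, mem_range] at hx
      have a : x ≠ 0 := by rintro rfl; exact hx.2 h2
      have b : x ≠ k := by rintro rfl; exact hx.2 h3
      rw [mem_Ioo]; omega
    · rw [card_sdiff_of_subset hs, card_range, h4]; omega
    · intro x hx
      obtain ⟨u, hu, h⟩ := h5 x hx
      exact ⟨u, fun h' => (mem_sdiff.1 h').2 hu, h⟩
  · intro S hS
    obtain ⟨h1, h2, h3⟩ := mem_runD.1 hS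
    have hs : S ⊆ range (k + 1) := fun u hu => by
      have := mem_Ioo.1 (h1 hu)
      rw [mem_range]; omega
    have h0 : 0 ∉ S := fun h => by have := mem_Ioo.1 (h1 h); omega
    have hkS : k ∉ S := fun h => by have := mem_Ioo.1 (h1 h); omega
    rw [mem_cutG]
    refine ⟨?_, ?_, ?_, ?_, ?_⟩
    · intro u hu
      have := mem_range.1 (mem_sdiff.1 hu).1
      omega
    · simp [h0]
    · simp [hkS]
    · rw [card_sdiff_of_subset hs, card_range, h2]; omega
    · intro x hx
      obtain ⟨u, hu, hxu, hum⟩ := h3 x hx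
      by_cases huk : u ≤ k
      · exact ⟨u, mem_sdiff.2 ⟨mem_range.2 (by omega), hu⟩, hxu, hum⟩
      · exact ⟨k, mem_sdiff.2 ⟨mem_range.2 (by omega), hkS⟩, hx, by omega⟩
  · intro U hU
    obtain ⟨h1, -⟩ := mem_cutG.1 hU
    have hs : U ⊆ range (k + 1) := fun u hu => by
      have := h1 u hu
      rw [mem_range]; omega
    simp [inter_eq_right.2 hs]
  · intro S hS
    obtain ⟨h1, -⟩ := mem_runD.1 hS
    have hs : S ⊆ range (k + 1) := fun u hu => by
      have := mem_Ioo.1 (h1 hu)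
      rw [mem_range]; omega
    simp [inter_eq_right.2 hs]

/-- Extending a run-free set `S` to many run-free sets with the same multiples of `m`. -/
lemma pool (m k d : ℕ) (hm : 1 ≤ m) (S : Finset ℕ) (hS : S ∈ runD m k d) :
    ∃ P : Finset ℕ, P ⊆ Ioo 0 k ∧ (∀ x ∈ P, ¬ m ∣ x) ∧ Disjoint S P ∧
      ((Ioo 0 k).filter (fun x => ¬ m ∣ x)).card ≤
        P.card + d + (S.filter (fun x => m ∣ x)).card ∧
      ∀ Y ⊆ P, ∀ x < k, ∃ u, u ∉ S ∪ Y ∧ x < u ∧ u ≤ x + m := by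
  obtain ⟨h1, h2, h3⟩ := mem_runD.1 hS
  have h0 : 0 ∉ S := fun h => by have := mem_Ioo.1 (h1 h); omega
  have hkS : k ∉ S := fun h => by have := mem_Ioo.1 (h1 h); omega
  have hL : ∀ x : ℕ, ∃ y, x ∈ S → y < x ∧ y ∉ S ∧ ∀ u, y < u → u < x → u ∈ S := by
    intro x
    by_cases hx : x ∈ S
    · have hx' := mem_Ioo.1 (h1 hx)
      have hne : ((range x).filter (· ∉ S)).Nonempty :=
        ⟨0, mem_filter.2 ⟨mem_range.2 hx'.1, h0⟩⟩
      have a := max'_mem _ hne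
      have b : ∀ u ∈ (range x).filter (· ∉ S), u ≤ ((range x).filter (· ∉ S)).max' hne := fun u hu => le_max' ((range x).filter (· ∉ S)) u hu
      generalize ((range x).filter (· ∉ S)).max' hne = y at a b
      rw [mem_filter, mem_range] at a
      refine ⟨y, fun _ => ⟨a.1, a.2, fun u hu hux => ?_⟩⟩
      by_contra hn
      have := b u (mem_filter.2 ⟨mem_range.2 hux, hn⟩)
      omega
    · exact ⟨0, fun h => absurd h hx⟩
  have hR : ∀ x : ℕ, ∃ y, x ∈ S → x < y ∧ y ∉ S ∧ ∀ u, x < u → u < y → u ∈ S := by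
    intro x
    by_cases hx : x ∈ S
    · have hx' := mem_Ioo.1 (h1 hx)
      have hne : ((Ioc x k).filter (· ∉ S)).Nonempty :=
        ⟨k, mem_filter.2 ⟨mem_Ioc.2 ⟨hx'.2, le_rfl⟩, hkS⟩⟩
      have a := min'_mem _ hne
      have b : ∀ u ∈ (Ioc x k).filter (· ∉ S), ((Ioc x k).filter (· ∉ S)).min' hne ≤ u := fun u hu => min'_le ((Ioc x k).filter (· ∉ S)) u hu
      generalize ((Ioc x k).filter (· ∉ S)).min' hne = y at a b
      rw [mem_filter, mem_Ioc] at a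
      refine ⟨y, fun _ => ⟨a.1.1, a.2, fun u hu hux => ?_⟩⟩
      by_contra hn
      have := b u (mem_filter.2 ⟨mem_Ioc.2 ⟨hu, by omega⟩, hn⟩)
      omega
    · exact ⟨0, fun h => absurd h hx⟩
  choose L hL using hL
  choose R hR using hR
  set A := S.filter (fun x => m ∣ x) with hA
  set B := S.filter (fun x => ¬ m ∣ x) with hB
  have hAB : A.card + B.card = d := by
    rw [← h2]; exact card_filter_add_card_filter_not _
  set N := (Ioo 0 k).filter (fun x => ¬ m ∣ x) with hN
  refine ⟨N \ (B ∪ (A.image L ∪ A.image R)), ?_, ?_, ?_, ?_, ?_⟩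
  · exact sdiff_subset.trans (filter_subset _ _)
  · intro x hx
    exact (mem_filter.1 (mem_sdiff.1 hx).1).2
  · rw [disjoint_left]
    intro x hx hx'
    rw [mem_sdiff] at hx'
    exact hx'.2 (mem_union_left _ (mem_filter.2 ⟨hx, (mem_filter.1 hx'.1).2⟩))
  · have c1 := le_card_sdiff (B ∪ (A.image L ∪ A.image R)) N
    have c2 := card_union_le B (A.image L ∪ A.image R)
    have c3 := card_union_le (A.image L) (A.image R)
    have c4 : (A.image L).card ≤ A.card := card_image_le
    have c5 : (A.image R).card ≤ A.card := card_image_le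
    omega
  · intro Y hY x hx
    by_contra hcon
    push Not at hcon
    have hall : ∀ u, x < u → u ≤ x + m → u ∈ S ∪ Y := by
      intro u hu1 hu2
      by_contra hn
      have := hcon u hn hu1
      omega
    have hYn : ∀ y ∈ Y, ¬ m ∣ y ∧ y ∉ A.image L ∧ y ∉ A.image R := by
      intro y hy
      have := hY hy
      simp only [mem_sdiff, mem_union, not_or] at this
      exact ⟨(mem_filter.1 this.1).2, this.2.2.1, this.2.2.2⟩
    obtain ⟨z, hz1, hz2, hzd⟩ : ∃ z, x < z ∧ z ≤ x + m ∧ m ∣ z := by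
      refine ⟨m * (x / m + 1), ?_, ?_, dvd_mul_right _ _⟩
      · exact Nat.lt_mul_div_succ x hm
      · have := Nat.mul_div_le x m
        rw [Nat.mul_add]; omega
    have hzS : z ∈ S := by
      rcases mem_union.1 (hall z hz1 hz2) with h | h
      · exact h
      · exact absurd hzd (hYn z h).1
    have hzA : z ∈ A := mem_filter.2 ⟨hzS, hzd⟩
    obtain ⟨l1, l2, l3⟩ := hL z hzS
    obtain ⟨r1, r2, r3⟩ := hR z hzS
    have hLz : L z ≤ x := by
      by_contra hn
      rcases mem_union.1 (hall (L z) (by omega) (by omega)) with h | h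
      · exact l2 h
      · exact (hYn _ h).2.1 (mem_image_of_mem _ hzA)
    have hRz : x + m < R z := by
      by_contra hn
      rcases mem_union.1 (hall (R z) (by omega) (by omega)) with h | h
      · exact r2 h
      · exact (hYn _ h).2.2 (mem_image_of_mem _ hzA)
    obtain ⟨u, hu, hu1, hu2⟩ := h3 x hx
    apply hu
    rcases lt_trichotomy u z with h | h | h
    · exact l3 u (by omega) h
    · exact h ▸ hzS
    · exact r3 u h (by omega)

lemma fiber_le (m k d e : ℕ) (hm : 1 ≤ m) (hde : d ≤ e)
    (hr : d + e ≤ ((Ioo 0 k).filter (fun x => ¬ m ∣ x)).card) (A : Finset ℕ) :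
    ((runD m k d).filter (fun S => S.filter (fun x => m ∣ x) = A)).card ≤
    ((runD m k e).filter (fun S => S.filter (fun x => m ∣ x) = A)).card := by
  by_cases had : A.card ≤ d
  swap
  · rw [card_eq_zero.2]
    · exact Nat.zero_le _
    · rw [eq_empty_iff_forall_notMem]
      intro S hS
      obtain ⟨hS, hSA⟩ := mem_filter.1 hS
      have := (mem_runD.1 hS).2.1
      have h' := card_filter_le S (fun x => m ∣ x)
      rw [hSA] at h'
      omega
  have hpos : 0 < (e - A.card).choose (e - d) := Nat.choose_pos (by omega)
  have hsymm : (e - A.card).choose (d - A.card) = (e - A.card).choose (e - d) := by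
    rw [← Nat.choose_symm (by omega : d - A.card ≤ e - A.card)]
    congr 1
    omega
  refine Nat.le_of_mul_le_mul_right ?_ hpos
  refine card_mul_le_card_mul (fun S T => S ⊆ T) ?_ ?_
  · intro S hS
    obtain ⟨hS, hSA⟩ := mem_filter.1 hS
    obtain ⟨P, p1, p2, p3, p4, p5⟩ := pool m k d hm S hS
    obtain ⟨h1, h2, h3⟩ := mem_runD.1 hS
    rw [hSA] at p4
    calc (e - A.card).choose (e - d) ≤ P.card.choose (e - d) :=
          Nat.choose_le_choose _ (by omega)
      _ = (powersetCard (e - d) P).card := (card_powersetCard _ _).symm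
      _ ≤ _ := by
        refine card_le_card_of_injOn (fun Y => S ∪ Y) ?_ ?_
        · intro Y hY
          obtain ⟨hYP, hYc⟩ := mem_powersetCard.1 (mem_coe.1 hY)
          have hdis := disjoint_of_subset_right hYP p3
          rw [mem_coe, mem_bipartiteAbove, mem_filter, mem_runD]
          refine ⟨⟨⟨union_subset h1 (hYP.trans p1), ?_, p5 Y hYP⟩, ?_⟩, subset_union_left⟩
          · rw [card_union_of_disjoint hdis]; omega
          · rw [filter_union, hSA, filter_eq_empty_iff.2, union_empty]
            exact fun x hx => p2 x (hYP hx)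
        · intro Y hY Z hZ h
          have hdY := disjoint_of_subset_right (mem_powersetCard.1 (mem_coe.1 hY)).1 p3
          have hdZ := disjoint_of_subset_right (mem_powersetCard.1 (mem_coe.1 hZ)).1 p3
          beta_reduce at h
          rw [← union_sdiff_cancel_left hdY, ← union_sdiff_cancel_left hdZ, h]
  · intro T hT
    obtain ⟨hT, hTA⟩ := mem_filter.1 hT
    obtain ⟨h1, h2, h3⟩ := mem_runD.1 hT
    have hAT : A ⊆ T := hTA ▸ filter_subset _ _
    rw [← hsymm, ← h2, ← card_sdiff_of_subset hAT, ← card_powersetCard]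
    refine card_le_card_of_injOn (fun S => S \ A) ?_ ?_
    · intro S hS
      rw [mem_coe, mem_bipartiteBelow, mem_filter, mem_runD] at hS
      obtain ⟨⟨⟨-, hc, -⟩, hSA⟩, hST⟩ := hS
      have hAS : A ⊆ S := hSA ▸ filter_subset _ _
      rw [mem_coe, mem_powersetCard, card_sdiff_of_subset hAS]
      exact ⟨sdiff_subset_sdiff hST le_rfl, by omega⟩
    · intro S hS S' hS' h
      rw [mem_coe, mem_bipartiteBelow, mem_filter] at hS hS'
      have hAS : A ⊆ S := hS.1.2 ▸ filter_subset _ _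
      have hAS' : A ⊆ S' := hS'.1.2 ▸ filter_subset _ _
      beta_reduce at h
      rw [← sdiff_union_of_subset hAS, ← sdiff_union_of_subset hAS', h]

lemma runD_le (m k d e : ℕ) (hm : 1 ≤ m) (hde : d ≤ e)
    (hr : d + e ≤ ((Ioo 0 k).filter (fun x => ¬ m ∣ x)).card) :
    (runD m k d).card ≤ (runD m k e).card := by
  have hmaps : ∀ d, ∀ S ∈ runD m k d, S.filter (fun x => m ∣ x) ∈ (Ioo 0 k).powerset := by
    intro d S hS
    exact mem_powerset.2 ((filter_subset _ _).trans (mem_runD.1 hS).1)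
  rw [card_eq_sum_card_fiberwise (hmaps d), card_eq_sum_card_fiberwise (hmaps e)]
  exact sum_le_sum fun A _ => fiber_le m k d e hm hde hr A

lemma card_nonmult (m k : ℕ) (hk : 1 ≤ k) :
    ((Ioo 0 k).filter (fun x => ¬ m ∣ x)).card + (k - 1) / m = k - 1 := by
  have h := card_filter_add_card_filter_not (s := Ioo 0 k) (fun x => m ∣ x)
  have e : Ioo 0 k = Ioc 0 (k - 1) := by
    ext x
    rw [mem_Ioo, mem_Ioc]
    omega
  have h2 : ((Ioo 0 k).filter (fun x => m ∣ x)).card = (k - 1) / m := by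
    rw [e]
    exact Nat.Ioc_filter_dvd_card_eq_div _ _
  rw [h2, Nat.card_Ioo] at h
  omega

end helpers

theorem stmt_8 (k m d : ℕ) (hk : 2 ≤ k) (hm : 2 ≤ m) (hd : 1 ≤ d)
    (h2d : 2 * d ≤ k - (k + m - 1) / m) :
    C m k (k - d) ≤ C m k ((k + m - 1) / m + d) := by
  have hq : (k + m - 1) / m = (k - 1) / m + 1 := by
    rw [show k + m - 1 = (k - 1) + m by omega, Nat.add_div_right _ (by omega)]
  rw [hq] at h2d ⊢
  have hc := card_nonmult m k (by omega)
  rw [C_eq_runD m k (k - d) (by omega) (by omega), C_eq_runD m k _ (by omega) (by omega)]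
  exact runD_le m k _ _ (by omega) (by omega) (by omega)
end

section
/- Let k, m, n be positive integers with k ≥ 2 and n ≥ k + ⌈k/m⌉. If 𝓐 is an intersecting family of k-multisets from [n] in which each element appears at most m times, then |𝓐| ≤ |𝓕|, where 𝓕 is the family of all such k-multisets containing the element 1. -/
attribute [local instance] Classical.propDecidable

/-- `f : Fin n → Fin (m+1)` is a `k`-multiset of `[n]_m`: each element appears
`f i ≤ m` times and the total size is `k`. -/
def IsKMultiset {n m : ℕ} (k : ℕ) (f : Fin n → Fin (m + 1)) : Prop :=
  ∑ i, (f i : ℕ) = k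

/-- Two multisets intersect: they share a common element. -/
def MIntersect {n m : ℕ} (f g : Fin n → Fin (m + 1)) : Prop :=
  ∃ i, 1 ≤ (f i : ℕ) ∧ 1 ≤ (g i : ℕ)

namespace EKRM
open Polynomial Finset

noncomputable def geomP (L : ℕ) : ℕ[X] := ∑ i ∈ range (L + 1), X ^ i

lemma geomP_succ (L : ℕ) : geomP (L + 1) = geomP L + X ^ (L + 1) := by
  unfold geomP; rw [sum_range_succ]

lemma geomP_succ' (L : ℕ) : geomP (L + 1) = X * geomP L + 1 := by
  unfold geomP; rw [sum_range_succ', mul_sum]; simp [pow_succ']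

lemma geomP_zero : geomP 0 = 1 := by simp [geomP]

lemma geomP_mul (a b : ℕ) :
    geomP (a + 1) * geomP (b + 1) = geomP (a + b + 2) + X * (geomP a * geomP b) := by
  induction b with
  | zero => 
    rw [geomP_zero, geomP_succ' 0, geomP_zero, geomP_succ (a + 0 + 1), geomP_succ (a + 0)]
    simp only [add_zero]; ring
  | succ b ih =>
    rw [geomP_succ (b + 1), mul_add, ih, geomP_succ b, show a + (b + 1) + 2 = a + b + 2 + 1 by ring,
      geomP_succ (a + b + 2), geomP_succ a]
    ring

noncomputable def Good (n : ℕ) : AddSubmonoid ℕ[X] :=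
  AddSubmonoid.closure {p | ∃ b L, 2 * b + L ≤ n ∧ p = X ^ b * geomP L}

lemma good_gen {n b L : ℕ} (h : 2 * b + L ≤ n) : X ^ b * geomP L ∈ Good n :=
  AddSubmonoid.subset_closure ⟨b, L, h, rfl⟩

lemma good_mono {n n' : ℕ} (h : n ≤ n') {p : ℕ[X]} (hp : p ∈ Good n) : p ∈ Good n' := by
  refine AddSubmonoid.closure_mono ?_ hp
  rintro p ⟨b, L, h1, rfl⟩
  exact ⟨b, L, by omega, rfl⟩

lemma good_geom_mul (a : ℕ) : ∀ b c n : ℕ, 2 * c + a + b ≤ n →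
    X ^ c * (geomP a * geomP b) ∈ Good n := by
  induction a with
  | zero => intro b c n h; rw [geomP_zero, one_mul]; exact good_gen (by omega)
  | succ a ih =>
    intro b c n h
    cases b with
    | zero => rw [geomP_zero, mul_one]; exact good_gen (by omega)
    | succ b =>
      rw [geomP_mul, mul_add]
      refine add_mem (good_gen (by omega)) ?_
      rw [← mul_assoc, ← pow_succ]
      exact ih b (c + 1) n (by omega)

lemma good_mul {n n' : ℕ} {p q : ℕ[X]} (hp : p ∈ Good n) (hq : q ∈ Good n') :
    p * q ∈ Good (n + n') := by
  unfold Good at hp hq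
  induction hp using AddSubmonoid.closure_induction with
  | zero => rw [zero_mul]; exact zero_mem _
  | add x y hx hy h1 h2 => rw [add_mul]; exact add_mem h1 h2
  | mem x hx =>
  induction hq using AddSubmonoid.closure_induction with
  | zero => rw [mul_zero]; exact zero_mem _
  | add x y hx hy h1 h2 => rw [mul_add]; exact add_mem h1 h2
  | mem y hy =>
    obtain ⟨b, L, h, rfl⟩ := hx
    obtain ⟨b', L', h', rfl⟩ := hy
    have := good_geom_mul L L' (b + b') (n + n') (by omega)
    convert this using 1
    ring

lemma good_one : (1 : ℕ[X]) ∈ Good 0 := by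
  have := good_gen (n := 0) (b := 0) (L := 0) (by simp)
  simpa [geomP_zero] using this

lemma good_X : (X : ℕ[X]) ∈ Good 2 := by
  have := good_gen (n := 2) (b := 1) (L := 0) (by simp)
  simpa [geomP_zero] using this

lemma good_oneX : (1 + X : ℕ[X]) ∈ Good 1 := by
  have := good_gen (n := 1) (b := 0) (L := 1) (by simp)
  simpa [geomP, sum_range_succ] using this

lemma good_coeff {n : ℕ} {p : ℕ[X]} (hp : p ∈ Good n) {s t : ℕ} (hts : t ≤ s) (h : n ≤ s + t) :
    p.coeff s ≤ p.coeff t := by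
  induction hp using AddSubmonoid.closure_induction with
  | mem x hx =>
    obtain ⟨b, L, h, rfl⟩ := hx
    rw [geomP, mul_sum]
    simp only [← pow_add, finsetSum_coeff, coeff_X_pow]
    rw [← card_filter, ← card_filter]
    by_cases hs : b ≤ s ∧ s ≤ b + L
    · have h1 : #{i ∈ range (L + 1) | s = b + i} ≤ 1 := by
        rw [card_le_one]; intro x hx y hy; simp at hx hy; omega
      have h2 : 0 < #{i ∈ range (L + 1) | t = b + i} := by
        rw [card_pos]; exact ⟨t - b, by simp; omega⟩
      omega
    · have : #{i ∈ range (L + 1) | s = b + i} = 0 := by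
        rw [card_eq_zero, filter_eq_empty_iff]; intro x hx; simp at hx; omega
      omega
  | zero => simp
  | add x y hx hy h1 h2 => simp only [coeff_add]; omega

/-- part polynomial -/
noncomputable def part (m : ℕ) : ℕ[X] := ∑ v ∈ Icc 1 m, X ^ v

noncomputable def cc (m s k : ℕ) : ℕ := ((part m) ^ s).coeff k

lemma cc_zero (m k : ℕ) : cc m 0 k = if k = 0 then 1 else 0 := by
  simp [cc, coeff_one]

lemma cc_succ (m s k : ℕ) :
    cc m (s + 1) k = ∑ w ∈ range k, if w + 1 ≤ m then cc m s (k - (w + 1)) else 0 := by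
  unfold cc
  rw [pow_succ, part, mul_sum, finsetSum_coeff, ← part]
  simp only [coeff_mul_X_pow']
  rw [← sum_filter, ← sum_filter]
  symm
  apply sum_nbij' (fun w => w + 1) (fun w => w - 1)
  · intro a ha; simp at ha ⊢; omega
  · intro a ha; simp at ha ⊢; omega
  · intro a ha; simp
  · intro a ha; simp at ha ⊢; omega
  · intro a ha; rfl

lemma cc_lt (m s k : ℕ) (h : k < s) : cc m s k = 0 := by
  induction s generalizing k with
  | zero => omega
  | succ s ih =>
    rw [cc_succ]; apply sum_eq_zero; intro w hw; simp at hw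
    rw [ih _ (by omega)]; simp

/-- Generating polynomial of the compositions of `k` with parts at most `m`, by number of parts. -/
noncomputable def GG (m k : ℕ) : ℕ[X] := ∑ s ∈ range (k + 1), monomial s (cc m s k)

lemma GG_coeff (m k s : ℕ) : (GG m k).coeff s = cc m s k := by
  simp only [GG, finsetSum_coeff, coeff_monomial]
  rw [sum_ite_eq']
  split_ifs with h
  · rfl
  · rw [cc_lt]; simp at h; omega

lemma GG_zero (m : ℕ) : GG m 0 = 1 := by
  simp [GG, cc_zero]

lemma GG_rec (m k : ℕ) (hk : 1 ≤ k) :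
    GG m k = X * ∑ w ∈ range k, if w + 1 ≤ m then GG m (k - (w + 1)) else 0 := by
  ext s
  cases s with
  | zero => rw [GG_coeff, cc_zero]; simp; omega
  | succ s =>
    rw [GG_coeff, cc_succ, coeff_X_mul, finsetSum_coeff]
    apply sum_congr rfl; intro w _
    split_ifs
    · rw [GG_coeff]
    · simp

/-- Solving the linear recurrence with source `σ`. -/
lemma solve (m : ℕ) (A σ : ℕ → ℕ[X])
    (hA : ∀ b, A b = σ b + X * ∑ w ∈ range b, if w + 1 ≤ m then A (b - (w + 1)) else 0) (b : ℕ) :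
    A b = ∑ q ∈ range (b + 1), σ q * GG m (b - q) := by
  induction b using Nat.strong_induction_on with
  | _ b ih =>
  rw [hA, sum_range_succ, Nat.sub_self, GG_zero, mul_one, add_comm]
  congr 1
  have h1 : ∀ q ∈ range b, σ q * GG m (b - q) =
      ∑ w ∈ range b, if w + 1 ≤ m ∧ q + (w + 1) ≤ b then
        X * (σ q * GG m (b - (w + 1) - q)) else 0 := by
    intro q hq
    simp at hq
    rw [GG_rec m _ (by omega), mul_left_comm, mul_sum, mul_sum, ← sum_filter]
    simp only [mul_ite, mul_zero]
    rw [← sum_filter]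
    apply sum_congr
    · ext x; simp; omega
    · intro x hx; rw [Nat.sub_right_comm]
  have h2 : ∀ w ∈ range b, (X * if w + 1 ≤ m then A (b - (w + 1)) else 0) =
      ∑ q ∈ range b, if w + 1 ≤ m ∧ q + (w + 1) ≤ b then
        X * (σ q * GG m (b - (w + 1) - q)) else 0 := by
    intro w hw
    simp at hw
    by_cases hwm : w + 1 ≤ m
    · simp only [hwm, true_and, if_true]
      rw [ih _ (by omega), mul_sum, ← sum_filter]
      apply sum_congr
      · ext x; simp; omega
      · intro x hx; rfl
    · simp [hwm]
  rw [sum_congr rfl h1, mul_sum, sum_congr rfl h2, sum_comm]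

/-- The threshold `k + ⌈k/m⌉`. -/
def nn (m k : ℕ) : ℕ := k + (k + m - 1) / m

lemma GG_good (m : ℕ) (hm : 1 ≤ m) (k : ℕ) : GG m k ∈ Good (nn m k) := by
  induction k using Nat.strong_induction_on with
  | _ k ih =>
  rcases Nat.eq_zero_or_pos k with rfl | hk
  · rw [GG_zero]; exact good_mono (Nat.zero_le _) good_one
  rcases Nat.lt_or_ge m k with hmk | hmk
  · obtain ⟨b, rfl⟩ : ∃ b, k = b + m := ⟨k - m, by omega⟩
    have key := solve m (fun b => GG m (b + m))
      (fun q => if q = 0 then GG m m else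
        X * ∑ p ∈ range m, if q + p + 1 ≤ m then GG m (m - (p + 1)) else 0) ?_ b
    · rw [key]
      refine sum_mem fun q hq => ?_
      simp at hq
      split_ifs with hq0
      · subst hq0
        refine good_mono ?_ (good_mul (ih m (by omega)) (ih (b - 0) (by omega)))
        unfold nn
        have e1 : (m + m - 1) / m = 1 := by
          rw [Nat.div_eq_iff (by omega)]; omega
        have e2 : (b + m + m - 1) / m = (b + m - 1) / m + 1 := by
          rw [show b + m + m - 1 = b + m - 1 + m by omega, Nat.add_div_right _ (by omega)]
        simp only [Nat.sub_zero]
        omega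
      · rw [mul_assoc, sum_mul, mul_sum]
        refine sum_mem fun p hp => ?_
        simp at hp
        split_ifs with hpq
        · refine good_mono ?_ (good_mul good_X
            (good_mul (ih (m - (p + 1)) (by omega)) (ih (b - q) (by omega))))
          unfold nn
          have e1 : (m - (p + 1) + m - 1) / m ≤ 1 := by
            rw [← Nat.lt_succ_iff, Nat.div_lt_iff_lt_mul (by omega)]; omega
          have e2 : (b + m + m - 1) / m = (b + m - 1) / m + 1 := by
            rw [show b + m + m - 1 = b + m - 1 + m by omega, Nat.add_div_right _ (by omega)]
          have e3 : (b - q + m - 1) / m ≤ (b + m - 1) / m := Nat.div_le_div_right (by omega)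
          omega
        · rw [zero_mul, mul_zero]; exact zero_mem _
    · intro b
      rcases Nat.eq_zero_or_pos b with rfl | hb
      · simp
      rw [if_neg (by omega), GG_rec m _ (by omega), ← mul_add, sum_range_add, add_comm]
      congr 2
      · apply sum_congr rfl
        intro p hp
        rw [show b + m - (b + p + 1) = m - (p + 1) by omega]
      · apply sum_congr rfl
        intro p hp
        simp at hp
        rw [show b + m - (p + 1) = b - (p + 1) + m by omega]
  · have e : nn m k = k + 1 := by
      unfold nn
      congr 1
      rw [Nat.div_eq_iff (by omega)]; omega
    obtain ⟨j, rfl⟩ : ∃ j, k = j + 1 := ⟨k - 1, by omega⟩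
    rcases Nat.eq_zero_or_pos j with rfl | hj
    · rw [GG_rec m _ (by omega), e]
      simp only [zero_add, sum_range_one, hm, if_true, Nat.sub_self, GG_zero, mul_one]
      exact good_X
    · have e' : nn m j = j + 1 := by
        unfold nn
        congr 1
        rw [Nat.div_eq_iff (by omega)]; omega
      have : GG m (j + 1) = (1 + X) * GG m j := by
        rw [GG_rec m (j + 1) (by omega), sum_range_succ', mul_add, add_mul, one_mul]
        congr 1
        · conv_rhs => rw [GG_rec m _ hj]
          congr 1
          apply sum_congr rfl
          intro w hw
          simp at hw
          rw [if_pos (by omega), if_pos (by omega), Nat.add_sub_add_right]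
        · simp [hm]
      rw [this, e]
      refine good_mono ?_ (good_mul good_oneX (ih j (by omega)))
      omega

theorem cc_le (m : ℕ) (hm : 1 ≤ m) (k s t : ℕ) (hts : t ≤ s) (h : k + (k + m - 1) / m ≤ s + t) :
    cc m s k ≤ cc m t k := by
  rw [← GG_coeff, ← GG_coeff]
  exact good_coeff (GG_good m hm k) hts h

lemma star_card {N : ℕ} (x : Fin (N + 1)) (s : ℕ) :
    #{S : Finset (Fin (N + 1)) | #S = s ∧ x ∈ S} + N.choose s = (N + 1).choose s := by
  have h1 : #{S : Finset (Fin (N + 1)) | #S = s ∧ x ∉ S} = N.choose s := by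
    have : ({S : Finset (Fin (N + 1)) | #S = s ∧ x ∉ S} : Finset _) =
        powersetCard s (univ.erase x) := by
      ext S
      simp only [mem_filter, mem_univ, true_and, mem_powersetCard, subset_erase, subset_univ]
      tauto
    rw [this, card_powersetCard, card_erase_of_mem (mem_univ _)]
    simp
  have h2 : #{S : Finset (Fin (N + 1)) | #S = s} = (N + 1).choose s := by
    have : ({S : Finset (Fin (N + 1)) | #S = s} : Finset _) = powersetCard s univ := by
      ext S; simp [mem_powersetCard]
    rw [this, card_powersetCard]; simp
  rw [← h1, ← h2, ← card_filter_add_card_filter_not (s := {S : Finset (Fin (N + 1)) | #S = s})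
    (fun S => x ∈ S), filter_filter, filter_filter]

lemma star_pair {N : ℕ} (x : Fin (N + 1)) (s t : ℕ) (h : s + t = N + 1) :
    #{S : Finset (Fin (N + 1)) | #S = s ∧ x ∈ S} + #{S : Finset (Fin (N + 1)) | #S = t ∧ x ∈ S}
      = (N + 1).choose s := by
  have h1 := star_card x s
  have h2 := star_card x t
  have h3 : (N + 1).choose t = (N + 1).choose s := by
    rw [← Nat.choose_symm_of_eq_add (n := N + 1) (a := s) (b := t) h.symm]
  have h4 : N.choose s + N.choose t = (N + 1).choose s := by
    cases s with
    | zero => simp at h; subst h; simp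
    | succ s =>
      rw [Nat.choose_succ_succ', ← Nat.choose_symm_of_eq_add (n := N) (a := s) (b := t) (by omega)]
      omega
  omega

lemma wEKR {N : ℕ} (x : Fin (N + 1)) (w : ℕ → ℕ)
    (hw : ∀ s t, t ≤ s → s + t = N + 1 → w s ≤ w t)
    (A : Finset (Finset (Fin (N + 1))))
    (hA : (A : Set (Finset (Fin (N + 1)))).Intersecting) :
    ∑ S ∈ A, w #S ≤ ∑ S with x ∈ S, w #S := by
  let a : ℕ → ℕ := fun s => #{S ∈ A | #S = s}
  let b : ℕ → ℕ := fun s => #{S : Finset (Fin (N + 1)) | #S = s ∧ x ∈ S}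
  have fib : ∀ B : Finset (Finset (Fin (N + 1))),
      ∑ S ∈ B, w #S = ∑ s ∈ range (N + 1 + 1), #{S ∈ B | #S = s} * w s := by
    intro B
    rw [← sum_fiberwise_of_maps_to (s := B) (t := range (N + 1 + 1)) (g := fun S => #S)]
    · apply sum_congr rfl
      intro s hs
      rw [← smul_eq_mul, ← sum_const]
      apply sum_congr rfl
      intro S hS
      rw [(mem_filter.1 hS).2]
    · intro S hS
      have := card_le_univ S
      simp at this ⊢
      omega
  rw [fib, fib]
  have hb : ∀ s, #{S ∈ ({S : Finset (Fin (N + 1)) | x ∈ S} : Finset _) | #S = s} = b s := by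
    intro s
    simp only [b, filter_filter, and_comm]
  simp only [hb]
  change ∑ s ∈ range (N + 1 + 1), a s * w s ≤ _
  have hale : ∀ s t, s ≤ t → s + t = N + 1 → a s ≤ b s := by
    intro s t hst h
    have h1 : a s ≤ (N + 1 - 1).choose (s - 1) := by
      apply erdos_ko_rado (r := s)
      · exact hA.mono (coe_subset.2 (filter_subset _ _))
      · intro S hS; simp at hS; exact hS.2
      · omega
    have h2 : b s + _ = _ := star_card x s
    cases s with
    | zero =>
      have : a 0 = 0 := by
        simp only [a, card_eq_zero]
        rw [filter_eq_empty_iff]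
        intro S hS h0
        exact hA.ne_bot hS h0
      omega
    | succ s =>
      rw [Nat.choose_succ_succ'] at h2
      simp at h1
      omega
  have hsum : ∀ s t, s + t = N + 1 → a s + a t ≤ b s + b t := by
    intro s t h
    have h1 : b s + b t = _ := star_pair x s t h
    rw [h1]
    have h2 : a t = #(({S ∈ A | #S = t}).image compl) := by
      rw [card_image_of_injective _ compl_injective]
    rw [h2, ← card_union_of_disjoint]
    · calc _ ≤ #(powersetCard s (univ : Finset (Fin (N + 1)))) := by
            apply card_le_card
            intro S hS
            rw [mem_powersetCard]
            refine ⟨subset_univ _, ?_⟩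
            simp only [mem_union, mem_filter, mem_image] at hS
            rcases hS with hS | ⟨T, hT, rfl⟩
            · exact hS.2
            · rw [card_compl, hT.2]; simp; omega
        _ = _ := by rw [card_powersetCard]; simp
    · rw [disjoint_left]
      intro S hS hS'
      simp only [mem_filter, mem_image] at hS hS'
      obtain ⟨T, hT, rfl⟩ := hS'
      exact hA hS.1 hT.1 disjoint_compl_left
  have hpair' : ∀ s t, s ≤ t → s + t = N + 1 →
      a s * w s + a t * w t ≤ b s * w s + b t * w t := by
    intro s t hst h
    have h1 := hale s t hst h
    have h2 := hsum s t h
    have h3 := hw t s hst (by omega)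
    obtain ⟨d, hd⟩ := Nat.exists_eq_add_of_le h3
    rw [hd]
    nlinarith [Nat.mul_le_mul_right d h1, Nat.mul_le_mul_right (w t) h2]
  have hpair : ∀ s t, s + t = N + 1 →
      a s * w s + a t * w t ≤ b s * w s + b t * w t := by
    intro s t h
    rcases le_total s t with h' | h'
    · exact hpair' s t h' h
    · have := hpair' t s h' (by omega)
      omega
  have r1 := sum_range_reflect (fun s => a s * w s) (N + 1 + 1)
  have r2 := sum_range_reflect (fun s => b s * w s) (N + 1 + 1)
  have : ∑ s ∈ range (N + 1 + 1), (a s * w s + a (N + 1 + 1 - 1 - s) * w (N + 1 + 1 - 1 - s)) ≤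
      ∑ s ∈ range (N + 1 + 1), (b s * w s + b (N + 1 + 1 - 1 - s) * w (N + 1 + 1 - 1 - s)) := by
    apply sum_le_sum
    intro s hs
    simp at hs
    exact hpair _ _ (by omega)
  rw [sum_add_distrib, sum_add_distrib, r1, r2] at this
  omega

/-- The support of a multiset. -/
noncomputable def supp {n m : ℕ} (f : Fin n → Fin (m + 1)) : Finset (Fin n) :=
  {i | 1 ≤ (f i : ℕ)}

lemma fiber_card {n m : ℕ} (k : ℕ) (S : Finset (Fin n)) :
    #{f : Fin n → Fin (m + 1) | ∑ i, (f i : ℕ) = k ∧ supp f = S} = cc m #S k := by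
  let t : Fin n → Finset (Fin (m + 1)) := fun i => {v | 1 ≤ (v : ℕ) ↔ i ∈ S}
  have h := prod_univ_sum t (fun _ v => (X : ℕ[X]) ^ (v : ℕ))
  have h1 : ∀ i, ∑ v ∈ t i, (X : ℕ[X]) ^ (v : ℕ) = if i ∈ S then part m else 1 := by
    intro i
    split_ifs with hi
    · simp only [t, hi, iff_true, part]
      apply sum_nbij (fun v : Fin (m + 1) => (v : ℕ))
      · intro v hv; simp at hv ⊢; omega
      · intro v _ v' _ h; exact Fin.ext h
      · intro v hv
        simp at hv
        refine ⟨⟨v, by omega⟩, ?_, rfl⟩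
        simp only [coe_filter, mem_univ, true_and]
        exact hv.1
      · intro v _; rfl
    · have : t i = {0} := by
        ext v
        simp only [t, hi, iff_false, mem_filter, mem_univ, true_and, mem_singleton]
        rw [Fin.ext_iff, Fin.val_zero]
        omega
      rw [this]; simp
  simp only [h1] at h
  rw [prod_ite, prod_const, prod_const_one, mul_one] at h
  have h2 : #{i : Fin n | i ∈ S} = #S := by
    congr 1; ext; simp
  rw [h2] at h
  rw [cc, h, finsetSum_coeff]
  simp only [prod_pow_eq_pow_sum, coeff_X_pow]
  rw [← card_filter]
  congr 1
  ext f
  simp only [mem_filter, mem_univ, true_and, Fintype.mem_piFinset, t, supp, Finset.ext_iff]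
  rw [and_comm, eq_comm]

end EKRM

theorem stmt_15 (k m n : ℕ) (hk : 2 ≤ k) (hm : 1 ≤ m)
    (hn : k + (k + m - 1) / m ≤ n)
    (𝓐 : Finset (Fin n → Fin (m + 1)))
    (h𝓐k : ∀ f ∈ 𝓐, IsKMultiset k f)
    (h𝓐int : ∀ f ∈ 𝓐, ∀ g ∈ 𝓐, MIntersect f g) :
    𝓐.card ≤ (Finset.univ.filter
      (fun f : Fin n → Fin (m + 1) =>
        IsKMultiset k f ∧
          1 ≤ ((f ⟨0, lt_of_lt_of_le
            (lt_of_lt_of_le (by omega) (Nat.le_add_right k ((k + m - 1) / m))) hn⟩ :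
              Fin (m + 1)) : ℕ))).card := by
  obtain ⟨N, rfl⟩ : ∃ N, n = N + 1 := ⟨n - 1, by
    have := (Nat.le_add_right k ((k + m - 1) / m)).trans hn
    omega⟩
  generalize_proofs hp
  generalize (⟨0, hp⟩ : Fin (N + 1)) = x
  have hint : ((𝓐.image EKRM.supp : Finset (Finset (Fin (N + 1)))) :
      Set (Finset (Fin (N + 1)))).Intersecting := by
    intro S hS T hT hd
    simp only [Finset.coe_image, Set.mem_image, Finset.mem_coe] at hS hT
    obtain ⟨f, hf, rfl⟩ := hS
    obtain ⟨g, hg, rfl⟩ := hT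
    obtain ⟨i, h1, h2⟩ := h𝓐int f hf g hg
    refine Finset.disjoint_left.1 hd (show i ∈ _ from ?_) ?_
    · simp only [EKRM.supp, Finset.mem_filter, Finset.mem_univ, true_and]; exact h1
    · simp only [EKRM.supp, Finset.mem_filter, Finset.mem_univ, true_and]; exact h2
  have main := EKRM.wEKR x (fun s => EKRM.cc m s k)
    (fun s t hts h => EKRM.cc_le m hm k s t hts (by omega)) _ hint
  have h1 : 𝓐.card ≤ ∑ S ∈ 𝓐.image EKRM.supp, EKRM.cc m S.card k := by
    rw [Finset.card_eq_sum_card_image EKRM.supp 𝓐]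
    apply Finset.sum_le_sum
    intro S hS
    rw [← EKRM.fiber_card]
    apply Finset.card_le_card
    intro f hf
    simp only [Finset.mem_filter, Finset.mem_univ, true_and] at hf ⊢
    exact ⟨h𝓐k f hf.1, hf.2⟩
  refine h1.trans (main.trans (le_of_eq ?_))
  rw [Finset.card_eq_sum_card_fiberwise (f := EKRM.supp)
    (t := Finset.univ.filter (fun S : Finset (Fin (N + 1)) => x ∈ S))]
  · apply Finset.sum_congr rfl
    intro S hS
    simp only [Finset.mem_filter, Finset.mem_univ, true_and] at hS
    rw [← EKRM.fiber_card, Finset.filter_filter]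
    congr 1
    ext f
    simp only [Finset.mem_filter, Finset.mem_univ, true_and]
    constructor
    · rintro ⟨h, rfl⟩
      simp only [EKRM.supp, Finset.mem_filter, Finset.mem_univ, true_and] at hS
      exact ⟨⟨h, hS⟩, rfl⟩
    · rintro ⟨⟨h, _⟩, h'⟩
      exact ⟨h, h'⟩
  · intro f hf
    simp only [Finset.coe_filter, Finset.mem_univ, true_and, Set.mem_ofPred_eq] at hf ⊢
    simp only [EKRM.supp, Finset.mem_filter, Finset.mem_univ, true_and]
    exact hf.2
end

section
/- Let k, m, n be positive integers with k ≥ 2, and suppose either (a) n > k + ⌈k/m⌉, or (b) n = k + ⌈k/m⌉ with k > m and m ∤ k. If 𝓐 is an intersecting family of k-multisets of [n]_m of maximum size, then 𝓐 is, up to a permutation of [n], the family of all k-multisets containing a fixed element. -/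
attribute [local instance] Classical.propDecidable

/-- The "star" family of all `k`-multisets of `[n]_m` containing the fixed element `x`. -/
noncomputable def star (n m k : ℕ) (x : Fin n) : Finset (Fin n → Fin (m + 1)) :=
  Finset.univ.filter (fun f => IsKMultiset k f ∧ 1 ≤ ((f x : Fin (m + 1)) : ℕ))

open Polynomial in
/-- generating polynomial of one part -/
noncomputable def partPoly (m : ℕ) : Polynomial ℕ := ∑ a ∈ Finset.Icc 1 m, (X : ℕ[X]) ^ a

/-- number of compositions of `k` into `s` parts, each in `[1,m]` -/
noncomputable def wt (m s k : ℕ) : ℕ := (partPoly m ^ s).coeff k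

lemma wt_zero (m k : ℕ) : wt m 0 k = if k = 0 then 1 else 0 := by
  simp [wt, Polynomial.coeff_one]

lemma wt_succ (m s k : ℕ) :
    wt m (s + 1) k = ∑ a ∈ Finset.Icc 1 m, if a ≤ k then wt m s (k - a) else 0 := by
  unfold wt
  rw [pow_succ', show partPoly m * partPoly m ^ s =
    ∑ a ∈ Finset.Icc 1 m, (Polynomial.X ^ a * partPoly m ^ s) by
      rw [← Finset.sum_mul]; rfl]
  rw [Polynomial.finsetSum_coeff]
  refine Finset.sum_congr rfl fun a _ => ?_
  rw [Polynomial.coeff_X_pow_mul']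

noncomputable def wtZ (m : ℕ) (k s : ℤ) : ℕ := if 0 ≤ k ∧ 0 ≤ s then wt m s.toNat k.toNat else 0

lemma wtZ_neg (m : ℕ) (k s : ℤ) (h : k < 0) : wtZ m k s = 0 := by
  unfold wtZ; rw [if_neg]; omega

lemma wtZ_zero (m : ℕ) (s : ℤ) : wtZ m 0 s = if s = 0 then 1 else 0 := by
  unfold wtZ
  by_cases h : s = 0
  · subst h; simp [wt_zero]
  rw [if_neg h]
  by_cases h2 : 0 ≤ s
  · rw [if_pos ⟨le_rfl, h2⟩]
    obtain ⟨t, rfl⟩ : ∃ t : ℕ, s = (t : ℤ) + 1 := ⟨(s - 1).toNat, by omega⟩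
    rw [show ((t : ℤ) + 1).toNat = t + 1 by omega, wt_succ]
    apply Finset.sum_eq_zero
    intro a ha
    rw [Finset.mem_Icc] at ha
    rw [if_neg]; simp; omega
  · rw [if_neg]; omega

lemma wtZ_rec (m : ℕ) (k s : ℤ) (hk : k ≠ 0) :
    wtZ m k s = ∑ a ∈ Finset.Icc 1 m, wtZ m (k - a) (s - 1) := by
  by_cases h2 : 0 < s
  · by_cases h1 : 0 ≤ k
    · obtain ⟨t, rfl⟩ : ∃ t : ℕ, s = (t : ℤ) + 1 := ⟨(s - 1).toNat, by omega⟩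
      obtain ⟨k, rfl⟩ : ∃ t : ℕ, k = (t : ℤ) := ⟨k.toNat, by omega⟩
      unfold wtZ
      rw [if_pos ⟨h1, by omega⟩, show ((t : ℤ) + 1).toNat = t + 1 by omega, wt_succ]
      refine Finset.sum_congr rfl fun a _ => ?_
      by_cases h : a ≤ k
      · rw [if_pos (by simpa using h), if_pos (by omega)]
        congr 1 <;> omega
      · rw [if_neg (by simpa using h), if_neg (by omega)]
    · rw [wtZ_neg _ _ _ (by omega)]
      symm
      apply Finset.sum_eq_zero
      intro a ha
      rw [wtZ_neg]; omega
  · have : wtZ m k s = 0 := by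
      unfold wtZ
      by_cases h : 0 ≤ k ∧ 0 ≤ s
      · rw [if_pos h, show s.toNat = 0 by omega, wt_zero, if_neg (by omega)]
      · rw [if_neg h]
    rw [this]
    symm
    apply Finset.sum_eq_zero
    intro a ha
    unfold wtZ; rw [if_neg]; omega

/-- compositions whose first part is at most `p` -/
noncomputable def vtZ (m p : ℕ) (k s : ℤ) : ℕ := ∑ a ∈ Finset.Icc 1 p, wtZ m (k - a) (s - 1)

def rk (m p : ℕ) (k : ℤ) : ℤ := k + 1 + (k - 1 + m - p) / m

lemma vtZ_succ (m p : ℕ) (k s : ℤ) :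
    vtZ m (p + 1) k s = vtZ m p (k - 1) s + wtZ m (k - 1) (s - 1) := by
  induction p with
  | zero => simp [vtZ]
  | succ p ih =>
    have h1 : vtZ m (p + 1 + 1) k s = vtZ m (p + 1) k s + wtZ m (k - (p + 1 + 1 : ℕ)) (s - 1) := by
      unfold vtZ; rw [Finset.sum_Icc_succ_top (by omega)]
    have h2 : vtZ m (p + 1) (k - 1) s
        = vtZ m p (k - 1) s + wtZ m (k - 1 - (p + 1 : ℕ)) (s - 1) := by
      unfold vtZ; rw [Finset.sum_Icc_succ_top (by omega)]
    rw [h1, h2, ih]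
    rw [show k - 1 - ((p + 1 : ℕ) : ℤ) = k - ((p + 1 + 1 : ℕ) : ℤ) by push_cast; ring]
    ring

lemma wtZ_split (m p : ℕ) (hp : p ≤ m) (k s : ℤ) (hk : k ≠ 0) :
    wtZ m k s = vtZ m p k s + ∑ a ∈ Finset.Ioc p m, wtZ m (k - a) (s - 1) := by
  rw [wtZ_rec m k s hk]
  unfold vtZ
  rw [← Finset.sum_union]
  · congr 1
    ext a; simp only [Finset.mem_union, Finset.mem_Icc, Finset.mem_Ioc]; omega
  · rw [Finset.disjoint_left]; intro a; simp only [Finset.mem_Icc, Finset.mem_Ioc]; omega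

lemma rk_succ (m p : ℕ) (k : ℤ) : rk m (p + 1) k = rk m p (k - 1) + 1 := by
  unfold rk
  rw [show k - 1 + (m : ℤ) - ((p + 1 : ℕ) : ℤ) = k - 1 - 1 + m - p by push_cast; ring]
  ring

lemma mono_aux (m : ℕ) (hm : 1 ≤ m) (N : ℕ) : ∀ k : ℤ, k < N →
    (∀ s t, s ≤ t → rk m m k ≤ s + t → wtZ m k t ≤ wtZ m k s) ∧
    (1 ≤ k → ∀ p : ℕ, 1 ≤ p → p ≤ m → ∀ s t, s ≤ t → rk m p k ≤ s + t →
      vtZ m p k t ≤ vtZ m p k s) := by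
  have hm' : (0 : ℤ) < m := by omega
  induction N with
  | zero =>
    intro k hk
    refine ⟨fun s t _ _ => ?_, fun h => by omega⟩
    rw [wtZ_neg _ _ _ (by simpa using hk)]; exact Nat.zero_le _
  | succ N ih =>
    intro k hk
    have hV : 1 ≤ k → ∀ p : ℕ, 1 ≤ p → p ≤ m → ∀ s t, s ≤ t → rk m p k ≤ s + t →
        vtZ m p k t ≤ vtZ m p k s := by
      intro hk1 p hp1 hpm s t hst hr
      obtain ⟨q, rfl⟩ : ∃ q, p = q + 1 := ⟨p - 1, by omega⟩
      rcases Nat.eq_zero_or_pos q with rfl | hq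
      · simp only [vtZ, zero_add, Finset.Icc_self, Finset.sum_singleton, Nat.cast_one]
        apply (ih (k - 1) (by push_cast at hk; omega)).1 _ _ (by omega)
        have : rk m (0 + 1) k = rk m m (k - 1) + 2 := by
          unfold rk
          have : (k - 1 + (m : ℤ) - ((0 + 1 : ℕ) : ℤ)) = (k - 1 - 1 + m - m) + m * 1 := by
            push_cast; ring
          rw [this, Int.add_mul_ediv_left _ _ (by omega)]
          ring
        omega
      · rw [vtZ_succ, vtZ_succ]
        rw [rk_succ] at hr
        rcases eq_or_lt_of_le hst with rfl | hlt
        · exact le_rfl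
        rcases eq_or_lt_of_le hk1 with rfl | hk2
        · have hz : ∀ s, vtZ m q (1 - 1) s = 0 := by
            intro s
            unfold vtZ
            apply Finset.sum_eq_zero
            intro a ha
            rw [Finset.mem_Icc] at ha
            rw [wtZ_neg]; omega
          rw [hz, hz, zero_add, zero_add]
          apply (ih (1 - 1) (by push_cast at hk; omega)).1 _ _ (by omega)
          have e1 : rk m m (1 - 1) = 0 := by
            unfold rk
            rw [show (1 : ℤ) - 1 - 1 + m - m = -1 by ring]
            have : (-1 : ℤ) / m = -1 := by
              rw [Int.ediv_eq_iff_of_pos hm']; constructor <;> linarith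
            omega
          have e2 : 1 ≤ rk m q (1 - 1) := by
            unfold rk
            have : 0 ≤ ((1 : ℤ) - 1 - 1 + m - q) / m := Int.ediv_nonneg (by push_cast at *; omega) (by omega)
            omega
          omega
        · rw [wtZ_split m q (by omega) (k - 1) (t - 1) (by omega),
            wtZ_split m q (by omega) (k - 1) (s - 1) (by omega)]
          have IH := (ih (k - 1) (by push_cast at hk; omega)).2 (by omega) q hq (by omega)
          have i1 := IH (s - 1) t (by omega) (by omega)
          have i2 := IH s (t - 1) (by omega) (by omega)
          have i3 : ∑ a ∈ Finset.Ioc q m, wtZ m (k - 1 - a) (t - 1 - 1)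
              ≤ ∑ a ∈ Finset.Ioc q m, wtZ m (k - 1 - a) (s - 1 - 1) := by
            apply Finset.sum_le_sum
            intro a ha
            rw [Finset.mem_Ioc] at ha
            apply (ih (k - 1 - a) (by push_cast at hk; omega)).1 _ _ (by omega)
            have : rk m m (k - 1 - a) + 3 ≤ rk m q (k - 1) := by
              unfold rk
              have : (k - 1 - a - 1 + (m : ℤ) - m) / m + 1 ≤ (k - 1 - 1 + (m : ℤ) - q) / m := by
                rw [← Int.add_mul_ediv_left _ 1 (by omega : (m : ℤ) ≠ 0)]
                apply Int.ediv_le_ediv hm'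
                omega
              omega
            omega
          omega
    refine ⟨?_, hV⟩
    intro s t hst hr
    rcases lt_trichotomy k 0 with h | h | h
    · rw [wtZ_neg _ _ _ h]; exact Nat.zero_le _
    · subst h
      rw [wtZ_zero, wtZ_zero]
      have : -1 ≤ (-1 : ℤ) / m := by
        rw [Int.le_ediv_iff_mul_le hm']; linarith
      unfold rk at hr
      rw [show (0 : ℤ) - 1 + m - m = -1 by ring] at hr
      split_ifs <;> omega
    · rw [wtZ_rec m k t (by omega), wtZ_rec m k s (by omega)]
      exact hV (by omega) m hm le_rfl s t hst hr

lemma wt_mono (m k s t : ℕ) (hm : 1 ≤ m) (hk : 1 ≤ k) (hst : s ≤ t)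
    (h : k + (k + m - 1) / m ≤ s + t) : wt m t k ≤ wt m s k := by
  have := (mono_aux m hm (k + 1) k (by omega)).1 s t (by omega) (by
    unfold rk
    have h1 : ((k : ℤ) - 1 + m - m) / m + 1 = ((k + m - 1) / m : ℕ) := by
      rw [← Int.add_mul_ediv_left _ 1 (by omega : (m : ℤ) ≠ 0)]
      push_cast [Nat.cast_sub (show 1 ≤ k + m by omega)]
      congr 1; ring
    omega)
  simpa [wtZ] using this

lemma wt_lt (m s : ℕ) : ∀ k, k < s → wt m s k = 0 := by
  induction s with
  | zero => intro k hk; omega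
  | succ s ih =>
    intro k hk
    rw [wt_succ]
    apply Finset.sum_eq_zero
    intro a ha
    rw [Finset.mem_Icc] at ha
    split_ifs
    · exact ih _ (by omega)
    · rfl

lemma wt_self (m s : ℕ) : wt m s s ≤ 1 := by
  induction s with
  | zero => simp [wt_zero]
  | succ s ih =>
    rw [wt_succ]
    refine le_trans ?_ ih
    rcases Nat.eq_zero_or_pos m with rfl | hm
    · simp
    rw [Finset.sum_eq_single 1]
    · simp
    · intro a ha h1
      rw [Finset.mem_Icc] at ha
      split_ifs
      · exact wt_lt _ _ _ (by omega)
      · rfl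
    · intro h; simp at h; omega

lemma wt_pos (m s : ℕ) : ∀ k, s ≤ k → k ≤ s * m → 1 ≤ wt m s k := by
  induction s with
  | zero => intro k _ h; simp at h; simp [h, wt_zero]
  | succ s ih =>
    intro k h1 h2
    rw [wt_succ]
    rw [Nat.succ_mul] at h2
    have hm : 1 ≤ m := by
      rcases Nat.eq_zero_or_pos m with rfl | hm
      · omega
      · exact hm
    have hs : s ≤ s * m := Nat.le_mul_of_pos_right _ hm
    obtain ⟨a, ha1, ha2, ha3, ha4⟩ : ∃ a, 1 ≤ a ∧ a ≤ m ∧ s + a ≤ k ∧ k ≤ s * m + a := by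
      by_cases h : k ≤ s * m + 1
      · exact ⟨1, le_rfl, hm, by omega, h⟩
      · exact ⟨k - s * m, by omega, by omega, by omega, by omega⟩
    refine le_trans ?_ (Finset.single_le_sum (fun _ _ => Nat.zero_le _) (Finset.mem_Icc.2 ⟨ha1, ha2⟩))
    rw [if_pos (by omega)]
    exact ih _ (by omega) (by omega)

lemma wt_two (m s k r : ℕ) (hs : 1 ≤ s) (hr : 1 ≤ r) (hrm : r < m) (hk : k = s * m + r) :
    2 ≤ wt m (s + 1) k := by
  rw [wt_succ]
  have hsub : ({r, r + 1} : Finset ℕ) ⊆ Finset.Icc 1 m := by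
    intro a; simp only [Finset.mem_insert, Finset.mem_singleton, Finset.mem_Icc]; omega
  have hs' : s * 2 ≤ s * m := Nat.mul_le_mul_left _ (by omega)
  refine le_trans ?_ (Finset.sum_le_sum_of_subset hsub)
  rw [Finset.sum_pair (by omega), if_pos (by omega), if_pos (by omega)]
  have := wt_pos m s (k - r) (by omega) (by omega)
  have := wt_pos m s (k - (r + 1)) (by omega) (by omega)
  omega

lemma exists_perm_map {n : ℕ} (B B' : Finset (Fin n)) (h : B.card = B'.card) :
    ∃ τ : Equiv.Perm (Fin n), B.map τ.toEmbedding = B' := by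
  have e : {x // x ∈ B} ≃ {x // x ∈ B'} := Finset.equivOfCardEq h
  refine ⟨e.extendSubtype, ?_⟩
  apply Finset.eq_of_subset_of_card_le
  · intro y hy
    rw [Finset.mem_map] at hy
    obtain ⟨x, hx, rfl⟩ := hy
    exact e.extendSubtype_mem x hx
  · rw [Finset.card_map, h]

noncomputable def permCount {n : ℕ} (J B : Finset (Fin n)) : ℕ :=
  (Finset.univ.filter fun σ : Equiv.Perm (Fin n) => J.map σ.toEmbedding = B).card

lemma permCount_eq {n : ℕ} (J B B' : Finset (Fin n)) (h : B.card = B'.card) :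
    permCount J B = permCount J B' := by
  obtain ⟨τ, hτ⟩ := exists_perm_map B B' h
  unfold permCount
  apply Finset.card_bij' (fun σ _ => τ * σ) (fun σ _ => τ⁻¹ * σ)
  · intro σ hσ
    simp only [Finset.mem_filter, Finset.mem_univ, true_and] at hσ ⊢
    rw [← hτ, ← hσ, Finset.map_map]; rfl
  · intro σ hσ
    simp only [Finset.mem_filter, Finset.mem_univ, true_and] at hσ ⊢
    have : (J.map (τ⁻¹ * σ).toEmbedding).map τ.toEmbedding = B.map τ.toEmbedding := by
      rw [hτ, ← hσ, Finset.map_map]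
      congr 1
      ext x; simp
    exact Finset.map_injective _ this
  · intro σ _; simp
  · intro σ _; simp

lemma permCount_sum {n : ℕ} (J : Finset (Fin n)) (𝓕 : Finset (Finset (Fin n))) :
    (Finset.univ.filter fun σ : Equiv.Perm (Fin n) => J.map σ.toEmbedding ∈ 𝓕).card
      = ∑ B ∈ 𝓕, permCount J B := by
  rw [Finset.card_eq_sum_card_fiberwise (f := fun σ : Equiv.Perm (Fin n) => J.map σ.toEmbedding)
    (t := 𝓕)]
  · refine Finset.sum_congr rfl fun B hB => ?_
    unfold permCount
    congr 1
    ext σ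
    simp only [Finset.mem_filter, Finset.mem_univ, true_and]
    constructor
    · exact fun h => h.2
    · exact fun h => ⟨h ▸ hB, h⟩
  · intro σ hσ
    simpa using hσ

lemma count_perm {n s : ℕ} (J : Finset (Fin n)) (hJ : J.card = s) (𝓕 : Finset (Finset (Fin n)))
    (h𝓕 : ∀ B ∈ 𝓕, B.card = s) :
    (Finset.univ.filter fun σ : Equiv.Perm (Fin n) => J.map σ.toEmbedding ∈ 𝓕).card * n.choose s
      = 𝓕.card * n.factorial := by
  have h1 : ∀ B : Finset (Fin n), B.card = s → permCount J B = permCount J J :=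
    fun B hB => permCount_eq J B J (by omega)
  have h2 : (Finset.univ.filter fun σ : Equiv.Perm (Fin n) =>
      J.map σ.toEmbedding ∈ Finset.powersetCard s Finset.univ).card = n.factorial := by
    rw [Finset.filter_true_of_mem]
    · rw [Finset.card_univ, Fintype.card_perm, Fintype.card_fin]
    · intro σ _
      simp [Finset.mem_powersetCard, hJ]
  rw [permCount_sum] at h2 ⊢
  rw [Finset.sum_congr rfl (fun B hB => h1 B (h𝓕 B hB))]
  rw [Finset.sum_congr rfl (fun B hB => h1 B (Finset.mem_powersetCard.1 hB).2)] at h2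
  simp only [Finset.sum_const, Finset.card_powersetCard, Finset.card_univ, Fintype.card_fin,
    smul_eq_mul] at h2 ⊢
  rw [← h2]; ring

lemma fin_sub_val {n : ℕ} (a j : Fin n) :
    ((a - j : Fin n) : ℕ) = if (j : ℕ) ≤ a then (a : ℕ) - j else n + a - j := by
  rw [Fin.val_sub]
  split_ifs with h
  · rw [show n - (j : ℕ) + a = (a - j) + n by omega, Nat.add_mod_right, Nat.mod_eq_of_lt (by omega)]
  · rw [Nat.mod_eq_of_lt (by omega)]; omega

/-- cyclic interval -/
noncomputable def arc {n : ℕ} (s : ℕ) (j : Fin n) : Finset (Fin n) :=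
  Finset.univ.filter fun a => ((a - j : Fin n) : ℕ) < s

lemma mem_arc {n s : ℕ} (j a : Fin n) : a ∈ arc s j ↔ ((a - j : Fin n) : ℕ) < s := by
  simp [arc]

lemma arc_card {n s : ℕ} (hs : s ≤ n) (j : Fin n) : (arc s j).card = s := by
  have : NeZero n := ⟨by have := j.2; omega⟩
  have h : (arc s j).map (Equiv.subRight j).toEmbedding
      = Finset.univ.filter fun a : Fin n => (a : ℕ) < s := by
    ext a
    simp only [Finset.mem_map_equiv, mem_arc, Finset.mem_filter, Finset.mem_univ, true_and]
    simp
  have h2 := congrArg Finset.card h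
  rw [Finset.card_map] at h2
  rw [h2, Fin.card_filter_val_lt]
  omega

/-- Katona circle lemma: `T` is a set of starting points with pairwise intersecting arcs. -/
lemma katona_map {n s : ℕ} (hs : 1 ≤ s) (hn : 2 * s ≤ n) (T : Finset (Fin n))
    (hT : ∀ i ∈ T, ∀ j ∈ T, ¬ Disjoint (arc s i) (arc s j)) :
    ∀ i ∈ T, ∀ j ∈ T, ((j - i : Fin n) : ℕ) < s ∨ n - s < ((j - i : Fin n) : ℕ) := by
  intro i hi j hj
  have := hT i hi j hj
  rw [Finset.not_disjoint_iff] at this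
  obtain ⟨a, h1, h2⟩ := this
  rw [mem_arc, fin_sub_val] at h1 h2
  rw [fin_sub_val]
  split_ifs at * <;> omega

lemma katona_arc {n s : ℕ} (hs : 1 ≤ s) (hn : 2 * s ≤ n) (T : Finset (Fin n))
    (hT : ∀ i ∈ T, ∀ j ∈ T, ((j - i : Fin n) : ℕ) < s ∨ n - s < ((j - i : Fin n) : ℕ)) :
    T.card ≤ s ∧ (2 * s < n → T.card = s → ∀ i ∈ T, (∀ i' ∈ T, ((i' - i : Fin n) : ℕ) ≠ 1) →
      ∀ e, e < s → ∃ j ∈ T, ((i - j : Fin n) : ℕ) = e) := by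
  rcases T.eq_empty_or_nonempty with rfl | ⟨i, hi⟩
  · simp
  let φ : Fin n → Fin n → ℕ := fun i d =>
    if ((d - i : Fin n) : ℕ) < s then ((d - i : Fin n) : ℕ) else ((d - i : Fin n) : ℕ) - (n - s)
  have hφ : ∀ i ∈ T, ∀ d ∈ T, φ i d ∈ Finset.range s := by
    intro i hi d hd
    have := hT i hi d hd
    have h2 := (d - i).2
    simp only [φ, Finset.mem_range]
    split_ifs <;> omega
  have hinj : ∀ i ∈ T, Set.InjOn (φ i) (T : Set (Fin n)) := by
    intro i hi d hd d' hd' h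
    have h1 := hT i hi d hd
    have h2 := hT i hi d' hd'
    have h3 := hT d hd d' hd'
    have h4 := hT d' hd' d hd
    simp only [φ] at h
    rw [fin_sub_val] at h1 h2 h3 h4
    rw [fin_sub_val, fin_sub_val] at h
    apply Fin.ext
    split_ifs at * <;> omega
  refine ⟨?_, ?_⟩
  · have := Finset.card_le_card_of_injOn (φ i) (hφ i hi) (hinj i hi)
    simpa using this
  · clear hi
    intro hn2 hc i hi h1
    have hsurj := Finset.surj_on_of_inj_on_of_card_le (s := T) (t := Finset.range s)
      (fun d _ => φ i d) (hφ i hi) (fun a b ha hb h => hinj i hi ha hb h) (by simp [hc])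
    have key : ∀ e, 1 ≤ e → e < s → ∃ j ∈ T, ((j - i : Fin n) : ℕ) = n - s + e := by
      intro e he
      induction e, he using Nat.le_induction with
      | base =>
        intro hes
        obtain ⟨d, hd, hd2⟩ := hsurj 1 (by simpa using hes)
        refine ⟨d, hd, ?_⟩
        have := h1 d hd
        simp only [φ] at hd2
        split_ifs at hd2 <;> omega
      | succ e he ih =>
        intro hes
        obtain ⟨j, hj, hj2⟩ := ih (by omega)
        obtain ⟨d, hd, hd2⟩ := hsurj (e + 1) (by simpa using hes)
        refine ⟨d, hd, ?_⟩
        simp only [φ] at hd2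
        have h3 := hT d hd j hj
        rw [fin_sub_val] at h3 hj2 ⊢
        rw [fin_sub_val] at hd2
        split_ifs at * <;> omega
    intro e he
    rcases Nat.eq_zero_or_pos e with rfl | hpos
    · exact ⟨i, hi, by rw [fin_sub_val]; simp⟩
    · obtain ⟨j, hj, hj2⟩ := key (s - e) (by omega) (by omega)
      refine ⟨j, hj, ?_⟩
      rw [fin_sub_val] at hj2 ⊢
      split_ifs at * <;> omega

/-- starting positions of arcs that are mapped into the family -/
noncomputable def starts {n : ℕ} (s : ℕ) (𝓕 : Finset (Finset (Fin n))) (σ : Equiv.Perm (Fin n)) :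
    Finset (Fin n) := Finset.univ.filter fun j => (arc s j).map σ.toEmbedding ∈ 𝓕

lemma starts_card {n s : ℕ} (hs : 1 ≤ s) (hn : 2 * s ≤ n) (𝓕 : Finset (Finset (Fin n)))
    (h𝓕 : ∀ B ∈ 𝓕, B.card = s) (hinter : ∀ A ∈ 𝓕, ∀ B ∈ 𝓕, ¬ Disjoint A B)
    (hcard : 𝓕.card = (n - 1).choose (s - 1)) (σ : Equiv.Perm (Fin n)) :
    (∀ i ∈ starts s 𝓕 σ, ∀ j ∈ starts s 𝓕 σ,
      ((j - i : Fin n) : ℕ) < s ∨ n - s < ((j - i : Fin n) : ℕ)) ∧ (starts s 𝓕 σ).card = s := by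
  have hall : ∀ σ : Equiv.Perm (Fin n), (∀ i ∈ starts s 𝓕 σ, ∀ j ∈ starts s 𝓕 σ,
      ((j - i : Fin n) : ℕ) < s ∨ n - s < ((j - i : Fin n) : ℕ)) := by
    intro σ
    apply katona_map hs hn
    intro i hi j hj hd
    simp only [starts, Finset.mem_filter, Finset.mem_univ, true_and] at hi hj
    exact hinter _ hi _ hj ((Finset.disjoint_map _).2 hd)
  refine ⟨hall σ, ?_⟩
  have hle : ∀ σ ∈ (Finset.univ : Finset (Equiv.Perm (Fin n))), (starts s 𝓕 σ).card ≤ s :=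
    fun σ _ => (katona_arc hs hn _ (hall σ)).1
  have hsum : ∑ σ : Equiv.Perm (Fin n), (starts s 𝓕 σ).card
      = ∑ σ : Equiv.Perm (Fin n), s := by
    have e1 : ∑ σ : Equiv.Perm (Fin n), (starts s 𝓕 σ).card
        = ∑ j : Fin n, (Finset.univ.filter fun σ : Equiv.Perm (Fin n) =>
            (arc s j).map σ.toEmbedding ∈ 𝓕).card := by
      simp only [starts, Finset.card_filter]
      rw [Finset.sum_comm]
    have hpos : 0 < n.choose s := Nat.choose_pos (by omega)
    apply Nat.eq_of_mul_eq_mul_right hpos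
    rw [e1, Finset.sum_mul, Finset.sum_congr rfl
      (fun j _ => count_perm (arc s j) (arc_card (by omega) j) 𝓕 h𝓕)]
    simp only [Finset.sum_const, Finset.card_univ, Fintype.card_fin, Fintype.card_perm,
      smul_eq_mul, hcard]
    obtain ⟨n, rfl⟩ : ∃ n', n = n' + 1 := ⟨n - 1, by omega⟩
    obtain ⟨s, rfl⟩ : ∃ n', s = n' + 1 := ⟨s - 1, by omega⟩
    have := Nat.add_one_mul_choose_eq n s
    simp only [Nat.add_sub_cancel]
    calc (n + 1) * (n.choose s * (n + 1).factorial)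
        = ((n + 1) * n.choose s) * (n + 1).factorial := by ring
      _ = _ := by rw [this]; ring
  exact (Finset.sum_eq_sum_iff_of_le hle).1 hsum σ (Finset.mem_univ _)

/-- realise `C`, `B`, and the swap of x for z in B, as arcs -/
lemma exists_arrangement {n s : ℕ} (hn : 2 * s ≤ n) (B C : Finset (Fin n)) (x z : Fin n)
    (hB : B.card = s) (hC : C.card = s) (hxB : x ∈ B) (hxC : x ∈ C) (hzB : z ∉ B) (hzC : z ∉ C) :
    ∃ (σ : Equiv.Perm (Fin n)) (i0 i i1 : Fin n), (i : ℕ) < s ∧ (i0 : ℕ) = 0 ∧ (i1 : ℕ) = i + 1 ∧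
      (arc s i0).map σ.toEmbedding = C ∧ (arc s i).map σ.toEmbedding = B ∧
      (arc s i1).map σ.toEmbedding = insert z (B.erase x) := by
  let r : Fin n → ℕ := fun y => if y ∈ C ∧ y ∉ B then 0 else if y = x then 1 else
    if y ∈ C then 2 else if y ∈ B then 3 else if y = z then 4 else 5
  let σ := Tuple.sort r
  have hmono : Monotone (r ∘ σ) := Tuple.monotone_sort r
  have hcnt : ∀ (a : ℕ) (S : Finset (Fin n)), (∀ y, r y ≤ a ↔ y ∈ S) →
      ∀ j : Fin n, (j : ℕ) < S.card ↔ σ j ∈ S := by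
    intro a S hS j
    rw [← hS]
    have h1 := Tuple.lt_card_le_iff_apply_le_of_monotone (j := j) (a := a) hmono
    have h2 : S.card = (Finset.univ.filter fun i => (r ∘ σ) i ≤ a).card := by
      rw [← Finset.card_map σ.symm.toEmbedding]
      congr 1
      ext i
      simp [Finset.mem_map_equiv, hS]
    rw [h2]
    exact h1
  have c0 := hcnt 0 (C \ B) (by
    intro y; simp only [r, Finset.mem_sdiff]; split_ifs <;> simp_all)
  have c1 := hcnt 1 (insert x (C \ B)) (by
    intro y; simp only [r, Finset.mem_insert, Finset.mem_sdiff]; split_ifs <;> simp_all)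
  have c2 := hcnt 2 C (by
    intro y; simp only [r]; split_ifs <;> simp_all)
  have c3 := hcnt 3 (C ∪ B) (by
    intro y; simp only [r, Finset.mem_union]; split_ifs <;> simp_all)
  have c4 := hcnt 4 (insert z (C ∪ B)) (by
    intro y; simp only [r, Finset.mem_insert, Finset.mem_union]; split_ifs <;> simp_all)
  have k0 : (C \ B).card < s := by
    rw [← hC]; apply Finset.card_lt_card
    rw [Finset.ssubset_iff_of_subset Finset.sdiff_subset]
    exact ⟨x, hxC, by simp [hxB]⟩
  rw [Finset.card_insert_of_notMem (by simp [hxB])] at c1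
  rw [hC] at c2
  have k3 : (C ∪ B).card = (C \ B).card + s := by
    rw [← Finset.card_sdiff_add_card, hB]
  rw [Finset.card_insert_of_notMem (by simp [hzB, hzC]), k3] at c4
  rw [k3] at c3
  refine ⟨σ, ⟨0, by omega⟩, ⟨(C \ B).card, by omega⟩, ⟨(C \ B).card + 1, by omega⟩, k0, rfl, rfl,
    ?_, ?_, ?_⟩
  · ext y
    rw [Finset.mem_map_equiv, mem_arc, fin_sub_val]
    have := c2 (σ.symm y)
    rw [Equiv.apply_symm_apply] at this
    rw [← this]
    simp
  · ext y
    rw [Finset.mem_map_equiv, mem_arc, fin_sub_val]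
    have h0 := c0 (σ.symm y)
    have h3 := c3 (σ.symm y)
    rw [Equiv.apply_symm_apply] at h0 h3
    have : y ∈ B ↔ y ∈ C ∪ B ∧ y ∉ C \ B := by simp; tauto
    rw [this, ← h0, ← h3]
    have := (σ.symm y).2
    simp only
    split_ifs <;> omega
  · ext y
    rw [Finset.mem_map_equiv, mem_arc, fin_sub_val]
    have h0 := c1 (σ.symm y)
    have h3 := c4 (σ.symm y)
    rw [Equiv.apply_symm_apply] at h0 h3
    have : y ∈ insert z (B.erase x) ↔ y ∈ insert z (C ∪ B) ∧ y ∉ insert x (C \ B) := by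
      have : z ≠ x := by rintro rfl; exact hzB hxB
      by_cases hy : y = z
      · subst hy; simp [this, hzC]
      · simp [hy]; tauto
    rw [this, ← h0, ← h3]
    have := (σ.symm y).2
    simp only
    split_ifs <;> omega

lemma exists_boundary {n s : ℕ} (𝓕 : Finset (Finset (Fin n))) (h𝓕 : ∀ B ∈ 𝓕, B.card = s) :
    ∀ (N : ℕ) (B D : Finset (Fin n)), B ∈ 𝓕 → D ∉ 𝓕 → D.card = s → (B \ D).card = N →
    ∃ (B : Finset (Fin n)) (x z : Fin n), B ∈ 𝓕 ∧ x ∈ B ∧ z ∉ B ∧ insert z (B.erase x) ∉ 𝓕 := by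
  intro N
  induction N using Nat.strong_induction_on with
  | _ N ih =>
    intro B D hB hD hDs hN
    have hBs := h𝓕 B hB
    have hc : (B \ D).card = (D \ B).card := Finset.card_sdiff_comm (by omega)
    have hne : (B \ D).Nonempty := by
      rw [Finset.nonempty_iff_ne_empty]
      intro h
      rw [Finset.sdiff_eq_empty_iff_subset] at h
      exact hD (Finset.eq_of_subset_of_card_le h (by omega) ▸ hB)
    have hne2 : (D \ B).Nonempty := by rw [← Finset.card_pos] at hne ⊢; omega
    obtain ⟨x, hx⟩ := hne
    obtain ⟨z, hz⟩ := hne2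
    rw [Finset.mem_sdiff] at hx hz
    by_cases h : insert z (B.erase x) ∈ 𝓕
    · refine ih _ ?_ _ D h hD hDs rfl
      rw [← hN]
      apply Finset.card_lt_card
      rw [Finset.ssubset_iff_of_subset]
      · exact ⟨x, by simp [hx], by
          have : x ≠ z := by rintro rfl; exact hx.2 hz.1
          simp [this]⟩
      · intro y hy
        simp only [Finset.mem_sdiff, Finset.mem_insert, Finset.mem_erase] at hy ⊢
        rcases hy with ⟨rfl | h, h2⟩
        · exact absurd hz.1 h2
        · exact ⟨h.2, h2⟩
    · exact ⟨B, x, z, hB, hx.1, hz.2, h⟩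

lemma ekr_unique {n s : ℕ} (hs : 1 ≤ s) (hn : 2 * s < n) (𝓕 : Finset (Finset (Fin n)))
    (h𝓕 : ∀ B ∈ 𝓕, B.card = s) (hinter : ∀ A ∈ 𝓕, ∀ B ∈ 𝓕, ¬ Disjoint A B)
    (hcard : 𝓕.card = (n - 1).choose (s - 1)) :
    ∃ x, ∀ C : Finset (Fin n), C.card = s → x ∈ C → C ∈ 𝓕 := by
  have hst := starts_card hs (by omega) 𝓕 h𝓕 hinter hcard
  have hne : 𝓕.Nonempty := by
    rw [← Finset.card_pos, hcard]; exact Nat.choose_pos (by omega)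
  obtain ⟨B, hB⟩ := hne
  obtain ⟨D, hD, hDs⟩ : ∃ D, D ⊆ Bᶜ ∧ D.card = s := by
    apply Finset.exists_subset_card_eq
    rw [Finset.card_compl, h𝓕 B hB, Fintype.card_fin]; omega
  have hDF : D ∉ 𝓕 := fun h => hinter B hB D h
    ((Finset.disjoint_left).2 fun y hy hy' => by simpa [hy] using hD hy')
  obtain ⟨B, x, z, hB, hx, hz, hB'⟩ := exists_boundary 𝓕 h𝓕 _ B D hB hDF hDs rfl
  have h1 : ∀ C : Finset (Fin n), C.card = s → x ∈ C → z ∉ C → C ∈ 𝓕 := by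
    intro C hC hxC hzC
    obtain ⟨σ, i0, i, i1, hi, hi0, hi1, e0, e, e1⟩ :=
      exists_arrangement (by omega) B C x z (h𝓕 B hB) hC hx hxC hz hzC
    obtain ⟨hT, hTc⟩ := hst σ
    obtain ⟨j, hj, hj2⟩ := (katona_arc hs (by omega) _ hT).2 hn hTc i
      (by simp [starts, e, hB]) (by
        intro i' hi' h
        have : i' = i1 := by
          apply Fin.ext
          rw [fin_sub_val] at h
          split_ifs at h <;> omega
        subst this
        simp [starts, e1, hB'] at hi') i hi
    have : j = i0 := by
      apply Fin.ext
      rw [fin_sub_val] at hj2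
      split_ifs at hj2 <;> omega
    subst this
    simpa [starts, e0] using hj
  have hxz : x ≠ z := by rintro rfl; exact hz hx
  have h2 : ∀ C ∈ 𝓕, x ∈ C := by
    intro C hC
    by_contra hxC
    obtain ⟨E, hE, hEs⟩ : ∃ E, E ⊆ (insert x (insert z C))ᶜ ∧ E.card = s - 1 := by
      apply Finset.exists_subset_card_eq
      rw [Finset.card_compl, Fintype.card_fin]
      have := Finset.card_insert_le x (insert z C)
      have := Finset.card_insert_le z C
      have := h𝓕 C hC
      omega
    have hE' : ∀ y ∈ E, y ≠ x ∧ y ≠ z ∧ y ∉ C := by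
      intro y hy; simpa using hE hy
    have hxE : x ∉ E := fun h => (hE' x h).1 rfl
    refine hinter C hC (insert x E) (h1 _ ?_ ?_ ?_) ?_
    · rw [Finset.card_insert_of_notMem hxE]; omega
    · simp
    · rw [Finset.mem_insert]; rintro (h | h)
      · exact hxz h.symm
      · exact (hE' z h).2.1 rfl
    · rw [Finset.disjoint_right]
      intro y hy
      rw [Finset.mem_insert] at hy
      rcases hy with rfl | hy
      · exact hxC
      · exact (hE' y hy).2.2
  refine ⟨x, ?_⟩
  have hsub : 𝓕 ⊆ (Finset.powersetCard (s - 1) (Finset.univ.erase x)).image (insert x) := by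
    intro C hC
    rw [Finset.mem_image]
    refine ⟨C.erase x, ?_, Finset.insert_erase (h2 C hC)⟩
    rw [Finset.mem_powersetCard]
    exact ⟨Finset.erase_subset_erase _ (Finset.subset_univ _), by
      rw [Finset.card_erase_of_mem (h2 C hC), h𝓕 C hC]⟩
  have heq := Finset.eq_of_subset_of_card_le hsub (by
    refine Finset.card_image_le.trans ?_
    rw [Finset.card_powersetCard, Finset.card_erase_of_mem (Finset.mem_univ _), Finset.card_univ,
      Fintype.card_fin, hcard])
  intro C hC hxC
  rw [heq, Finset.mem_image]
  refine ⟨C.erase x, ?_, Finset.insert_erase hxC⟩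
  rw [Finset.mem_powersetCard]
  exact ⟨Finset.erase_subset_erase _ (Finset.subset_univ _), by
    rw [Finset.card_erase_of_mem hxC, hC]⟩

/-- support of a multiset -/
noncomputable def msupp {n m : ℕ} (f : Fin n → Fin (m + 1)) : Finset (Fin n) :=
  Finset.univ.filter fun i => 1 ≤ (f i : ℕ)

lemma mem_msupp {n m : ℕ} (f : Fin n → Fin (m + 1)) (i : Fin n) :
    i ∈ msupp f ↔ 1 ≤ (f i : ℕ) := by simp [msupp]

lemma fiber_card (n m k : ℕ) (S : Finset (Fin n)) :
    (Finset.univ.filter fun f : Fin n → Fin (m + 1) => IsKMultiset k f ∧ msupp f = S).card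
      = wt m S.card k := by
  let t : Fin n → Finset (Fin (m + 1)) := fun i =>
    if i ∈ S then Finset.univ.filter (fun a => 1 ≤ (a : ℕ)) else {0}
  have ht : ∀ f : Fin n → Fin (m + 1), msupp f = S ↔ f ∈ Fintype.piFinset t := by
    intro f
    rw [Fintype.mem_piFinset, Finset.ext_iff]
    refine forall_congr' fun i => ?_
    rw [mem_msupp]
    simp only [t]
    split_ifs with h
    · simp [h]
    · simp only [h, iff_false, Finset.mem_singleton, Fin.ext_iff, Fin.val_zero]; omega
  have hP : ∑ a ∈ Finset.univ.filter (fun a : Fin (m + 1) => 1 ≤ (a : ℕ)),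
      (Polynomial.X : Polynomial ℕ) ^ (a : ℕ) = partPoly m := by
    rw [Finset.sum_filter,
      Fin.sum_univ_eq_sum_range (fun a => if 1 ≤ a then (Polynomial.X : Polynomial ℕ) ^ a else 0),
      ← Finset.sum_filter]
    unfold partPoly
    congr 1
    ext a; simp only [Finset.mem_filter, Finset.mem_range, Finset.mem_Icc]; omega
  have hprod := Finset.prod_univ_sum t (fun _ a => (Polynomial.X : Polynomial ℕ) ^ (a : ℕ))
  have hl : ∏ i, ∑ a ∈ t i, (Polynomial.X : Polynomial ℕ) ^ (a : ℕ) = partPoly m ^ S.card := by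
    rw [← Finset.prod_const, ← Finset.prod_subset (Finset.subset_univ S)]
    · refine Finset.prod_congr rfl fun i hi => ?_
      simp only [t, if_pos hi]
      exact hP
    · intro i _ hi
      simp [t, if_neg hi]
  rw [hl] at hprod
  unfold wt
  rw [hprod, Polynomial.finsetSum_coeff]
  simp only [Finset.prod_pow_eq_pow_sum, Polynomial.coeff_X_pow]
  rw [← Finset.card_filter]
  congr 1
  ext f
  simp only [Finset.mem_filter, Finset.mem_univ, true_and, ht, IsKMultiset]
  constructor
  · rintro ⟨h1, h2⟩; exact ⟨h2, h1.symm⟩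
  · rintro ⟨h1, h2⟩; exact ⟨h2.symm, h1⟩

lemma sum_by_card {n : ℕ} (𝓢 : Finset (Finset (Fin n))) (w : ℕ → ℕ) :
    ∑ S ∈ 𝓢, w S.card
      = ∑ s ∈ Finset.range (n + 1), (𝓢.filter fun S => S.card = s).card * w s := by
  rw [← Finset.sum_fiberwise_of_maps_to (t := Finset.range (n + 1)) (g := Finset.card)]
  · refine Finset.sum_congr rfl fun s _ => ?_
    rw [Finset.sum_congr rfl (g := fun _ => w s)]
    · rw [Finset.sum_const, smul_eq_mul]
    · intro S hS; rw [(Finset.mem_filter.1 hS).2]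
  · intro S _
    have := Finset.card_le_univ S
    rw [Fintype.card_fin] at this
    simp; omega

lemma arith {n c : ℕ} (d : ℕ → ℤ) (w : ℕ → ℕ)
    (hsum : ∑ s ∈ Finset.range (n + 1), d s * w s ≤ 0)
    (h1 : ∀ s, s ≤ n → 0 ≤ d s + d (n - s)) (h2 : ∀ s, 2 * s ≤ n → 0 ≤ d s)
    (h3 : ∀ s, 2 * s ≤ n → w (n - s) ≤ w s) (hc : 2 * c < n) (hw : w (n - c) < w c) :
    d c = 0 := by
  have hr := Finset.sum_range_reflect (fun s => d s * (w s : ℤ)) (n + 1)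
  have hhalf : ∀ s, 2 * s ≤ n → ((w s : ℤ) - w (n - s)) * d s
      ≤ d s * w s + d (n - s) * w (n - s) := by
    intro s hs
    have := mul_nonneg (h1 s (by omega)) (Int.natCast_nonneg (w (n - s)))
    nlinarith
  have hg : ∀ s ∈ Finset.range (n + 1), 0 ≤ d s * w s + d (n - s) * w (n - s) := by
    intro s hs
    rw [Finset.mem_range] at hs
    by_cases h : 2 * s ≤ n
    · refine le_trans (mul_nonneg ?_ (h2 s h)) (hhalf s h)
      have := h3 s h; omega
    · have e : n - (n - s) = s := by omega
      have h' : 2 * (n - s) ≤ n := by omega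
      have := hhalf (n - s) h'
      rw [e] at this
      rw [add_comm]
      refine le_trans (mul_nonneg ?_ (h2 _ h')) this
      have := h3 _ h'; rw [e] at this; omega
  have hle := Finset.single_le_sum hg (show c ∈ Finset.range (n + 1) by simp; omega)
  rw [Finset.sum_add_distrib] at hle
  have hr' : ∑ s ∈ Finset.range (n + 1), d (n - s) * (w (n - s) : ℤ)
      = ∑ s ∈ Finset.range (n + 1), d s * (w s : ℤ) := by
    rw [← hr]
    refine Finset.sum_congr rfl fun s _ => ?_
    simp
  rw [hr'] at hle
  have a1 := hhalf c (by omega)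
  have a2 := h2 c (by omega)
  have a3 : (1 : ℤ) ≤ (w c : ℤ) - w (n - c) := by omega
  nlinarith

lemma card_sets_through {n : ℕ} (x : Fin n) (s : ℕ) (hs : 1 ≤ s) :
    ((Finset.univ.filter fun S : Finset (Fin n) => x ∈ S).filter fun S => S.card = s).card
      = (n - 1).choose (s - 1) := by
  have : ((Finset.univ.filter fun S : Finset (Fin n) => x ∈ S).filter fun S => S.card = s)
      = (Finset.powersetCard (s - 1) (Finset.univ.erase x)).image (insert x) := by
    ext C
    simp only [Finset.mem_filter, Finset.mem_univ, true_and, Finset.mem_image,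
      Finset.mem_powersetCard]
    constructor
    · rintro ⟨hx, hC⟩
      exact ⟨C.erase x, ⟨Finset.erase_subset_erase _ (Finset.subset_univ _), by
        rw [Finset.card_erase_of_mem hx, hC]⟩, Finset.insert_erase hx⟩
    · rintro ⟨D, ⟨hD, hDc⟩, rfl⟩
      have : x ∉ D := fun h => by simpa using hD h
      exact ⟨by simp, by rw [Finset.card_insert_of_notMem this]; omega⟩
  rw [this, Finset.card_image_of_injOn]
  · rw [Finset.card_powersetCard, Finset.card_erase_of_mem (Finset.mem_univ _), Finset.card_univ,
      Fintype.card_fin]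
  · intro D hD E hE h
    have hD' : x ∉ D := fun h => by simpa using (Finset.mem_powersetCard.1 hD).1 h
    have hE' : x ∉ E := fun h => by simpa using (Finset.mem_powersetCard.1 hE).1 h
    rw [← Finset.erase_insert hD', h, Finset.erase_insert hE']

lemma pair_bound {n : ℕ} (𝓢 : Finset (Finset (Fin n)))
    (hinter : ∀ A ∈ 𝓢, ∀ B ∈ 𝓢, ¬ Disjoint A B) (s : ℕ) (hs : s ≤ n) :
    (𝓢.filter fun S => S.card = s).card + (𝓢.filter fun S => S.card = n - s).card
      ≤ n.choose s := by
  rw [← Finset.card_image_of_injective (𝓢.filter fun S => S.card = n - s)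
    (compl_injective : Function.Injective (compl : Finset (Fin n) → Finset (Fin n))),
    ← Finset.card_union_of_disjoint]
  · have : n.choose s = (Finset.powersetCard s (Finset.univ : Finset (Fin n))).card := by simp
    rw [this]
    apply Finset.card_le_card
    intro S hS
    rw [Finset.mem_powersetCard]
    refine ⟨Finset.subset_univ _, ?_⟩
    rw [Finset.mem_union, Finset.mem_filter, Finset.mem_image] at hS
    rcases hS with h | ⟨T, hT, rfl⟩
    · exact h.2
    · rw [Finset.card_compl, (Finset.mem_filter.1 hT).2, Fintype.card_fin]; omega
  · rw [Finset.disjoint_left]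
    intro S hS hS'
    rw [Finset.mem_image] at hS'
    obtain ⟨T, hT, rfl⟩ := hS'
    exact hinter _ (Finset.mem_filter.1 hS).1 _ (Finset.mem_filter.1 hT).1 disjoint_compl_left

lemma mem_starF {n m k : ℕ} (x : Fin n) (f : Fin n → Fin (m + 1)) :
    f ∈ star n m k x ↔ IsKMultiset k f ∧ 1 ≤ (f x : ℕ) := by
  unfold _root_.star
  simp only [Finset.mem_filter, Finset.mem_univ, true_and]

theorem stmt_16 (k m n : ℕ) (hk : 2 ≤ k) (hm : 1 ≤ m) (hn : 1 ≤ n)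
    (hcase : k + (k + m - 1) / m < n ∨
      (n = k + (k + m - 1) / m ∧ m < k ∧ ¬ m ∣ k))
    (𝓐 : Finset (Fin n → Fin (m + 1)))
    (h𝓐k : ∀ f ∈ 𝓐, IsKMultiset k f)
    (h𝓐int : ∀ f ∈ 𝓐, ∀ g ∈ 𝓐, MIntersect f g)
    (hmax : ∀ 𝓑 : Finset (Fin n → Fin (m + 1)),
      (∀ f ∈ 𝓑, IsKMultiset k f) → (∀ f ∈ 𝓑, ∀ g ∈ 𝓑, MIntersect f g) →
      𝓑.card ≤ 𝓐.card) :
    ∃ x : Fin n, 𝓐 = star n m k x := by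
  obtain ⟨c, hc⟩ : ∃ c, c = (k + m - 1) / m := ⟨_, rfl⟩
  rw [← hc] at hcase
  have hdm := Nat.div_add_mod (k + m - 1) m
  have hml := Nat.mod_lt (k + m - 1) hm
  rw [← hc] at hdm
  have hcm1 : k ≤ c * m := by rw [mul_comm]; omega
  have hc1 : 1 ≤ c := by
    rcases Nat.eq_zero_or_pos c with h | h
    · rw [h] at hcm1; omega
    · exact h
  have hcm2 : (c - 1) * m + 1 ≤ k := by
    obtain ⟨c', rfl⟩ : ∃ c', c = c' + 1 := ⟨c - 1, by omega⟩
    have : m * (c' + 1) = c' * m + m := by ring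
    simp only [Nat.add_sub_cancel]; omega
  have hck : c ≤ k := by
    have : c - 1 ≤ (c - 1) * m := Nat.le_mul_of_pos_right _ hm
    omega
  have hnk : k + c ≤ n := by omega
  -- strictness at `c`
  have hstrict : 2 * c < n ∧ wt m (n - c) k < wt m c k := by
    rcases hcase with h | ⟨h, hmk, hndvd⟩
    · refine ⟨by omega, ?_⟩
      rw [wt_lt _ _ _ (by omega)]
      exact wt_pos m c k hck hcm1
    · have hm2 : 2 ≤ m := by
        by_contra h'
        have : m = 1 := by omega
        subst this; simp at hndvd
      have hc2 : 2 ≤ c := by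
        by_contra h'
        have : c = 1 := by omega
        subst this; omega
      have hlt : k < c * m := lt_of_le_of_ne hcm1 fun h => hndvd ⟨c, by rw [h]; ring⟩
      obtain ⟨c', rfl⟩ : ∃ c', c = c' + 1 := ⟨c - 1, by omega⟩
      simp only [Nat.add_sub_cancel] at hcm2
      rw [Nat.succ_mul] at hlt
      have h2 : c' * 2 ≤ c' * m := Nat.mul_le_mul_left _ hm2
      refine ⟨by omega, ?_⟩
      have e : n - (c' + 1) = k := by omega
      rw [e]
      have := wt_self m k
      have := wt_two m c' k (k - c' * m) (by omega) (by omega) (by omega) (by omega)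
      omega
  obtain ⟨h2c, hw⟩ := hstrict
  let 𝓢 : Finset (Finset (Fin n)) := 𝓐.image msupp
  have hSint : ∀ A ∈ 𝓢, ∀ B ∈ 𝓢, ¬ Disjoint A B := by
    intro A hA B hB
    obtain ⟨f, hf, rfl⟩ := Finset.mem_image.1 hA
    obtain ⟨g, hg, rfl⟩ := Finset.mem_image.1 hB
    obtain ⟨i, h1, h2⟩ := h𝓐int f hf g hg
    rw [Finset.not_disjoint_iff]
    exact ⟨i, (mem_msupp f i).2 h1, (mem_msupp g i).2 h2⟩
  have hAle : 𝓐.card ≤ ∑ S ∈ 𝓢, wt m S.card k := by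
    rw [Finset.card_eq_sum_card_image msupp 𝓐]
    apply Finset.sum_le_sum
    intro S _
    rw [← fiber_card n m k S]
    apply Finset.card_le_card
    intro f hf
    rw [Finset.mem_filter] at hf
    simp only [Finset.mem_filter, Finset.mem_univ, true_and]
    exact ⟨h𝓐k f hf.1, hf.2⟩
  have hstar : ∀ x : Fin n, (star n m k x).card ≤ 𝓐.card := by
    intro x
    apply hmax
    · intro f hf
      rw [mem_starF] at hf
      exact hf.1
    · intro f hf g hg
      rw [mem_starF] at hf hg
      exact ⟨x, hf.2, hg.2⟩
  let x0 : Fin n := ⟨0, by omega⟩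
  let 𝓣 : Finset (Finset (Fin n)) := Finset.univ.filter fun S => x0 ∈ S
  have hstarcard : (star n m k x0).card = ∑ S ∈ 𝓣, wt m S.card k := by
    rw [Finset.card_eq_sum_card_fiberwise (f := msupp) (t := 𝓣)]
    · refine Finset.sum_congr rfl fun S hS => ?_
      rw [← fiber_card n m k S]
      congr 1
      ext f
      simp only [mem_starF, Finset.mem_filter, Finset.mem_univ, true_and]
      constructor
      · rintro ⟨⟨h1, _⟩, h2⟩; exact ⟨h1, h2⟩
      · rintro ⟨h1, rfl⟩
        exact ⟨⟨h1, (mem_msupp f x0).1 (Finset.mem_filter.1 hS).2⟩, rfl⟩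
    · intro f hf
      rw [Finset.mem_coe, mem_starF] at hf
      exact Finset.mem_filter.2 ⟨Finset.mem_univ _, (mem_msupp f x0).2 hf.2⟩
  have hmain : ∑ S ∈ 𝓣, wt m S.card k ≤ ∑ S ∈ 𝓢, wt m S.card k := by
    rw [← hstarcard]; exact (hstar x0).trans hAle
  rw [sum_by_card 𝓣 (fun s => wt m s k), sum_by_card 𝓢 (fun s => wt m s k)] at hmain
  have hb : ∀ s, 1 ≤ s → (𝓣.filter fun S => S.card = s).card = (n - 1).choose (s - 1) :=
    card_sets_through x0
  have hb0 : (𝓣.filter fun S => S.card = 0).card = 0 := by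
    rw [Finset.card_eq_zero, Finset.filter_eq_empty_iff]
    intro S hS h0
    rw [Finset.card_eq_zero] at h0
    subst h0
    simp [𝓣] at hS
  have ha0 : (𝓢.filter fun S => S.card = 0).card = 0 := by
    rw [Finset.card_eq_zero, Finset.filter_eq_empty_iff]
    intro S hS h0
    rw [Finset.card_eq_zero] at h0
    subst h0
    exact hSint _ hS _ hS (by simp)
  have hbb : ∀ s, s ≤ n → (𝓣.filter fun S => S.card = s).card
      + (𝓣.filter fun S => S.card = n - s).card = n.choose s := by
    intro s hs
    rcases Nat.eq_zero_or_pos s with rfl | hs0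
    · rw [hb0, hb _ (by omega)]; simp
    rcases eq_or_lt_of_le hs with rfl | hlt
    · rw [Nat.sub_self, hb0, hb _ hs0]; simp
    · rw [hb _ hs0, hb _ (by omega)]
      rw [show n - s - 1 = n - 1 - s by omega, Nat.choose_symm (by omega)]
      obtain ⟨n, rfl⟩ : ∃ n', n = n' + 1 := ⟨n - 1, by omega⟩
      obtain ⟨s, rfl⟩ : ∃ n', s = n' + 1 := ⟨s - 1, by omega⟩
      rw [Nat.choose_succ_succ]; rfl
  have hdc := arith (n := n) (c := c) (fun s => ((𝓣.filter fun S => S.card = s).card : ℤ)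
      - (𝓢.filter fun S => S.card = s).card) (fun s => wt m s k)
    (by
      simp only [sub_mul, Finset.sum_sub_distrib]
      have : ((∑ s ∈ Finset.range (n + 1), (𝓣.filter fun S => S.card = s).card * wt m s k : ℕ) : ℤ)
        ≤ ((∑ s ∈ Finset.range (n + 1), (𝓢.filter fun S => S.card = s).card * wt m s k : ℕ) : ℤ) :=
        by exact_mod_cast hmain
      push_cast at this
      linarith)
    (by
      intro s hs
      have e1 := pair_bound 𝓢 hSint s hs
      have e2 := hbb s hs
      omega)
    (by
      intro s hs
      rcases Nat.eq_zero_or_pos s with rfl | hs0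
      · rw [ha0, hb0]; simp
      have := Finset.erdos_ko_rado (𝒜 := 𝓢.filter fun S => S.card = s) (r := s)
        (by
          intro A hA B hB
          exact hSint A (Finset.mem_filter.1 hA).1 B (Finset.mem_filter.1 hB).1)
        (by intro A hA; exact (Finset.mem_filter.1 hA).2) (by omega)
      rw [← hb s hs0] at this
      omega)
    (by
      intro s hs
      exact wt_mono m k s (n - s) hm (by omega) (by omega) (by omega))
    h2c hw
  have hcardc : (𝓢.filter fun S => S.card = c).card = (n - 1).choose (c - 1) := by
    rw [← hb c hc1]; omega
  obtain ⟨x, hx⟩ := ekr_unique hc1 h2c (𝓢.filter fun S => S.card = c)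
    (fun B hB => (Finset.mem_filter.1 hB).2)
    (fun A hA B hB => hSint A (Finset.mem_filter.1 hA).1 B (Finset.mem_filter.1 hB).1) hcardc
  refine ⟨x, Finset.eq_of_subset_of_card_le ?_ (hstar x)⟩
  intro f hf
  rw [mem_starF]
  refine ⟨h𝓐k f hf, ?_⟩
  rw [← mem_msupp]
  by_contra hxf
  have hcardf : (msupp f).card ≤ k := by
    have h := h𝓐k f hf
    unfold IsKMultiset at h
    rw [← h, Finset.card_eq_sum_ones]
    refine le_trans (Finset.sum_le_sum fun i hi => (mem_msupp f i).1 hi) ?_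
    exact Finset.sum_le_sum_of_subset (Finset.subset_univ _)
  obtain ⟨E, hE, hEs⟩ : ∃ E, E ⊆ (insert x (msupp f))ᶜ ∧ E.card = c - 1 := by
    apply Finset.exists_subset_card_eq
    rw [Finset.card_compl, Fintype.card_fin, Finset.card_insert_of_notMem hxf]
    omega
  have hE' : ∀ y ∈ E, y ≠ x ∧ y ∉ msupp f := by
    intro y hy; simpa using hE hy
  have hxE : x ∉ E := fun h => (hE' x h).1 rfl
  have hmem := hx (insert x E) (by rw [Finset.card_insert_of_notMem hxE]; omega) (by simp)
  refine hSint _ (Finset.mem_image_of_mem _ hf) _ (Finset.mem_filter.1 hmem).1 ?_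
  rw [Finset.disjoint_right]
  intro y hy
  rw [Finset.mem_insert] at hy
  rcases hy with rfl | hy
  · exact hxf
  · exact (hE' y hy).2
end
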